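/- arXiv:2010.14801 — 4 statements merged into one kernel-verified Lean document; each statement's English description precedes it below -/
import Mathlib

section
/- For every d ∈ ℕ there exist constants c(d) > 0 and ε₀(d) > 0 with the following property. For every ε ∈ (0, ε₀(d)) and all n_1, …, n_d ∈ ℕ, setting N = n_1 ⋯ n_d, there is a set of signum tensors S* ⊆ {−1,1}^{n_1×⋯×n_d} of cardinality |S*| ≥ 2^N − 2^{N c(d) ε log₂(1/ε)} such that: whenever a tensor T ∈ ℝ^{n_1×⋯×n_d} has all entries nonzero and (sign T_I)_I ∈ S*, then for every tensor T̃ of rank at most ε N / max_j{n_j} one has ∑_I |T_I − T̃_I| ≥ ε N · min_I |T_I|. -/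
/-- A tensor `T ∈ ℝ^{n₁×⋯×n_d}` has rank at most `m` if it is a sum of `m` tensors of
the form `u¹_{i₁} ⋯ u^d_{i_d}`. -/
def tensorRankLE {d : ℕ} {n : Fin d → ℕ} (T : ((i : Fin d) → Fin (n i)) → ℝ) (m : ℕ) :
    Prop :=
  ∃ u : Fin m → (i : Fin d) → Fin (n i) → ℝ, ∀ I, T I = ∑ s, ∏ i, u s i (I i)

/-- A signum tensor: all entries are `±1`. -/
def IsSignTensor {d : ℕ} {n : Fin d → ℕ} (S : ((i : Fin d) → Fin (n i)) → ℝ) : Prop :=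
  ∀ I, S I = 1 ∨ S I = -1


lemma trace_bd {X : Type*} [Fintype X] (W : Submodule ℝ (EuclideanSpace ℝ X)) :
    ∃ e : Fin (Module.finrank ℝ W) → X → ℝ, (∀ j, ∑ x, e j x ^ 2 = 1) ∧
      ∀ g ∈ W, ∃ a : Fin (Module.finrank ℝ W) → ℝ, (∀ x, g x = ∑ j, a j * e j x) ∧
        ∑ j, a j ^ 2 = ∑ x, g x ^ 2 := by
  classical
  let B := stdOrthonormalBasis ℝ W
  refine ⟨fun j x => (B j : EuclideanSpace ℝ X) x, fun j => ?_, fun g hg => ?_⟩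
  · have h1 : ‖(B j : EuclideanSpace ℝ X)‖ = 1 := B.norm_eq_one j
    rw [EuclideanSpace.norm_eq, Real.sqrt_eq_one] at h1
    simpa using h1
  · refine ⟨fun j => B.repr ⟨g, hg⟩ j, fun x => ?_, ?_⟩
    · have := congrArg (fun z : W => (z : EuclideanSpace ℝ X) x) (B.sum_repr ⟨g, hg⟩)
      simp at this
      rw [← this]
    · have h2 : ‖B.repr ⟨g, hg⟩‖ = ‖g‖ := B.repr.norm_map ⟨g, hg⟩
      have h3 := congrArg (· ^ 2) h2
      simp only [EuclideanSpace.norm_sq_eq] at h3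
      simpa using h3

/-- scaling -/
noncomputable def scaleMap {X : Type*} [Fintype X] (s : X → ℝ) :
    (X → ℝ) →ₗ[ℝ] EuclideanSpace ℝ X where
  toFun f := WithLp.toLp 2 (fun x => s x * f x)
  map_add' f g := by ext x; simp [mul_add]
  map_smul' c f := by ext x; simp; ring

lemma trace_bd' {X : Type*} [Fintype X] (V : Submodule ℝ (X → ℝ)) (w : X → ℝ)
    (hw : ∀ x, 0 ≤ w x) :
    ∃ q : ℕ, q ≤ Module.finrank ℝ V ∧ ∃ e : Fin q → X → ℝ, (∀ j, ∑ x, e j x ^ 2 = 1) ∧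
      ∀ f ∈ V, ∃ a : Fin q → ℝ, (∀ x, √(w x) * f x = ∑ j, a j * e j x) ∧
        ∑ j, a j ^ 2 = ∑ x, w x * f x ^ 2 := by
  obtain ⟨e, he, h⟩ := trace_bd (V.map (scaleMap (fun x => √(w x))))
  refine ⟨_, Submodule.finrank_map_le _ _, e, he, fun f hf => ?_⟩
  obtain ⟨a, h1, h2⟩ := h _ (Submodule.mem_map_of_mem hf)
  refine ⟨a, h1, h2.trans ?_⟩
  refine Finset.sum_congr rfl fun x _ => ?_
  simp [scaleMap, mul_pow, Real.sq_sqrt (hw x)]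

lemma count_bd {X : Type*} [Fintype X] (V : Submodule ℝ (X → ℝ)) (w : X → ℝ)
    (hw : ∀ x, 0 ≤ w x) (hdef : ∀ f ∈ V, ∑ x, w x * f x ^ 2 = 0 → f = 0)
    (τ : ℝ) (Z : Finset X)
    (hZ : ∀ x ∈ Z, ∃ f ∈ V, f ≠ 0 ∧ τ * ∑ y, w y * f y ^ 2 ≤ w x * f x ^ 2) :
    τ * Z.card ≤ Module.finrank ℝ V := by
  obtain ⟨q, hq, e, he, h⟩ := trace_bd' V w hw
  have key : ∀ x ∈ Z, τ ≤ ∑ j, e j x ^ 2 := by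
    intro x hx
    obtain ⟨f, hf, hf0, hle⟩ := hZ x hx
    obtain ⟨a, h1, h2⟩ := h f hf
    have hpos : 0 < ∑ y, w y * f y ^ 2 := by
      refine lt_of_le_of_ne (Finset.sum_nonneg fun y _ => mul_nonneg (hw y) (sq_nonneg _)) ?_
      intro h0
      exact hf0 (hdef f hf h0.symm)
    have h3 : w x * f x ^ 2 = (∑ j, a j * e j x) ^ 2 := by
      rw [← h1, mul_pow, Real.sq_sqrt (hw x)]
    have h4 := Finset.sum_mul_sq_le_sq_mul_sq Finset.univ a (fun j => e j x)
    rw [← h3, h2] at h4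
    have : τ * ∑ y, w y * f y ^ 2 ≤ (∑ j, e j x ^ 2) * ∑ y, w y * f y ^ 2 := by linarith
    exact le_of_mul_le_mul_right this hpos
  calc τ * Z.card = ∑ x ∈ Z, τ := by simp [mul_comm]
    _ ≤ ∑ x ∈ Z, ∑ j, e j x ^ 2 := Finset.sum_le_sum key
    _ ≤ ∑ x, ∑ j, e j x ^ 2 := Finset.sum_le_sum_of_subset_of_nonneg (Finset.subset_univ _)
        (fun x _ _ => Finset.sum_nonneg fun j _ => sq_nonneg _)
    _ = ∑ j, ∑ x, e j x ^ 2 := Finset.sum_comm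
    _ = q := by simp [he]
    _ ≤ _ := by exact_mod_cast hq

lemma exists_weights {X : Type*} [Fintype X] [DecidableEq X] (V : Submodule ℝ (X → ℝ)) (b : ℕ)
    (τ : ℝ) (hτ : 0 < τ) (hb : (Module.finrank ℝ V : ℝ) < τ * (b + 1))
    (hrob : ∀ f ∈ V, ∀ Z : Finset X, Z.card ≤ b + 1 → (∀ x ∉ Z, f x = 0) → f = 0) :
    ∃ w : X → ℝ, (∀ x, 0 ≤ w x) ∧ (∀ f ∈ V, ∑ x, w x * f x ^ 2 = 0 → f = 0) ∧
      ∀ f ∈ V, ∀ x, w x * f x ^ 2 ≤ τ * ∑ y, w y * f y ^ 2 := by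
  have hdef : ∀ w : X → ℝ, (∀ x, 0 ≤ w x) → ∀ S : Finset X, S.card ≤ b + 1 →
      (∀ x ∉ S, w x = 1) → ∀ f ∈ V, ∑ x, w x * f x ^ 2 = 0 → f = 0 := by
    intro w hw S hS h1 f hf h0
    refine hrob f hf S hS fun x hx => ?_
    rw [Finset.sum_eq_zero_iff_of_nonneg (fun y _ => mul_nonneg (hw y) (sq_nonneg _))] at h0
    have := h0 x (Finset.mem_univ _)
    rw [h1 x hx] at this
    simpa using this
  let I : Set (X → ℝ) := Set.Icc 0 1
  let C : X → Set ((X → ℝ) × (X → ℝ)) := fun x =>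
    (I ×ˢ Set.Icc (-1) 1) ∩ ({p | p.2 ∈ V} ∩ {p | ∑ y, p.2 y ^ 2 = 1} ∩
      {p | τ * ∑ y, p.1 y * p.2 y ^ 2 ≤ p.1 x * p.2 x ^ 2})
  have hC : ∀ x, IsCompact (C x) := by
    intro x
    refine (isCompact_Icc.prod isCompact_Icc).inter_right ?_
    refine ((V.closed_of_finiteDimensional.preimage continuous_snd).inter ?_).inter ?_
    · exact isClosed_eq (by fun_prop) (by fun_prop)
    · exact isClosed_le (by fun_prop) (by fun_prop)
  let P : Set (X → ℝ) := I ∩ ((⋃ S : {S : Finset X // S.card ≤ b}, {w | ∀ x ∉ S.1, w x = 1}) ∩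
    ⋂ x, ({w | w x = 1} ∪ Prod.fst '' C x))
  have hP : IsCompact P := by
    refine isCompact_Icc.inter_right (IsClosed.inter ?_ ?_)
    · refine isClosed_iUnion_of_finite fun S => ?_
      simp only [Set.ofPred_forall]
      exact isClosed_iInter fun x => isClosed_iInter fun _ =>
        isClosed_eq (by fun_prop) (by fun_prop)
    · refine isClosed_iInter fun x => IsClosed.union (isClosed_eq (by fun_prop) (by fun_prop)) ?_
      exact ((hC x).image continuous_fst).isClosed
  have hne : P.Nonempty := by
    refine ⟨1, ⟨zero_le_one, le_rfl⟩, ?_, ?_⟩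
    · exact Set.mem_iUnion.2 ⟨⟨∅, by simp⟩, by simp⟩
    · exact Set.mem_iInter.2 fun x => Or.inl rfl
  obtain ⟨w, hwP, hmin⟩ := hP.exists_isMinOn hne
    (f := fun w : X → ℝ => ∑ x, w x) (by fun_prop)
  obtain ⟨hwI, hwS, hwx⟩ := hwP
  obtain ⟨⟨S, hS⟩, hwS⟩ := Set.mem_iUnion.1 hwS
  have hw0 : ∀ x, 0 ≤ w x := hwI.1
  have hw1 : ∀ x, w x ≤ 1 := hwI.2
  refine ⟨w, hw0, hdef w hw0 S (by omega) hwS, ?_⟩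
  by_contra hcon
  push Not at hcon
  obtain ⟨f, hf, x, hlt⟩ := hcon
  set Q := ∑ y, w y * f y ^ 2 with hQ
  have hQ0 : 0 ≤ Q := Finset.sum_nonneg fun y _ => mul_nonneg (hw0 y) (sq_nonneg _)
  have hτQ : 0 ≤ τ * Q := by positivity
  have hfx : f x ≠ 0 := by
    intro h0
    rw [h0] at hlt
    simp at hlt
    linarith
  have hfx2 : 0 < f x ^ 2 := by positivity
  let t := τ * Q / f x ^ 2
  have ht0 : 0 ≤ t := by positivity
  have htw : t < w x := by rw [div_lt_iff₀ hfx2]; exact hlt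
  let w' := Function.update w x t
  have hw'w : ∀ y, w' y ≤ w y := by
    intro y
    by_cases h : y = x
    · subst h; simp [w', htw.le]
    · simp [w', h]
  have hw'0 : ∀ y, 0 ≤ w' y := by
    intro y
    by_cases h : y = x
    · subst h; simp [w', ht0]
    · simp [w', h, hw0]
  have hw'I : w' ∈ I := ⟨hw'0, fun y => (hw'w y).trans (hw1 y)⟩
  have hQle : ∀ g : X → ℝ, ∑ y, w' y * g y ^ 2 ≤ ∑ y, w y * g y ^ 2 := fun g =>
    Finset.sum_le_sum fun y _ => mul_le_mul_of_nonneg_right (hw'w y) (sq_nonneg _)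
  have hw'x : ∀ y, w' y = 1 ∨ w' ∈ Prod.fst '' C y := by
    intro y
    by_cases h : y = x
    · subst h
      right
      have hs : 0 < ∑ z, f z ^ 2 :=
        lt_of_lt_of_le hfx2 (Finset.single_le_sum (f := fun z => f z ^ 2)
          (fun z _ => sq_nonneg _) (Finset.mem_univ y))
      set r := √(∑ z, f z ^ 2) with hr
      have hr2 : r ^ 2 = ∑ z, f z ^ 2 := Real.sq_sqrt hs.le
      have hr0 : 0 < r := Real.sqrt_pos.2 hs
      have hn : ∑ z, (r⁻¹ * f z) ^ 2 = 1 := by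
        simp only [mul_pow, ← Finset.mul_sum]
        rw [← hr2]; field_simp
      have hle1 : ∀ z, (r⁻¹ * f z) ^ 2 ≤ 1 := fun z => by
        rw [← hn]
        exact Finset.single_le_sum (f := fun z => (r⁻¹ * f z) ^ 2)
          (fun z _ => sq_nonneg _) (Finset.mem_univ z)
      refine ⟨(w', r⁻¹ • f), ⟨⟨hw'I, ?_, ?_⟩, ⟨V.smul_mem _ hf, ?_⟩, ?_⟩, rfl⟩
      · intro z; exact (abs_le.1 ((sq_le_one_iff_abs_le_one _).1 (hle1 z))).1
      · intro z; exact (abs_le.1 ((sq_le_one_iff_abs_le_one _).1 (hle1 z))).2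
      · simpa using hn
      · have h1 : w' y * f y ^ 2 = τ * Q := by
          simp [w', t]; field_simp
        have h2 := hQle f
        simp only [Set.mem_ofPred_eq, Pi.smul_apply, smul_eq_mul, mul_pow]
        have h3 : ∑ z, w' z * (r⁻¹ ^ 2 * f z ^ 2) = r⁻¹ ^ 2 * ∑ z, w' z * f z ^ 2 := by
          rw [Finset.mul_sum]; exact Finset.sum_congr rfl fun z _ => by ring
        rw [h3]
        have h4 : τ * ∑ z, w' z * f z ^ 2 ≤ w' y * f y ^ 2 := by
          rw [h1]; exact mul_le_mul_of_nonneg_left h2 hτ.le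
        have h5 := mul_le_mul_of_nonneg_left h4 (sq_nonneg r⁻¹)
        linarith
    · rcases Set.mem_iInter.1 hwx y with h1 | ⟨⟨w₁, g⟩, ⟨⟨_, hg1⟩, ⟨hg2, hg3⟩, hg4⟩, hw₁⟩
      · left; simpa [w', h] using h1
      · right
        simp only at hw₁
        subst hw₁
        refine ⟨(w', g), ⟨⟨hw'I, hg1⟩, ⟨hg2, hg3⟩, ?_⟩, rfl⟩
        simp only [Set.mem_ofPred_eq] at hg4 ⊢
        have : w' y = w₁ y := by simp [w', h]
        rw [this]
        exact (mul_le_mul_of_nonneg_left (hQle g) hτ.le).trans hg4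
  have hw'P : w' ∈ P := by
    refine ⟨hw'I, ?_, Set.mem_iInter.2 hw'x⟩
    let Z := Finset.univ.filter fun y => w' y ≠ 1
    have hdef' := hdef w' hw'0 (insert x S) ((Finset.card_insert_le _ _).trans (by omega))
      (by
        intro y hy
        simp only [Finset.mem_insert, not_or] at hy
        simpa [w', hy.1] using hwS y hy.2)
    have hcard := count_bd V w' hw'0 hdef' τ Z (by
      intro y hy
      rcases hw'x y with h1 | ⟨⟨w₁, g⟩, ⟨⟨_, hg1⟩, ⟨hg2, hg3⟩, hg4⟩, hw₁⟩
      · simp [Z, h1] at hy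
      · simp only at hw₁
        subst hw₁
        refine ⟨g, hg2, ?_, hg4⟩
        rintro rfl
        simp at hg3)
    refine Set.mem_iUnion.2 ⟨⟨Z, ?_⟩, ?_⟩
    · have : (Z.card : ℝ) < b + 1 := lt_of_mul_lt_mul_left (hcard.trans_lt hb) hτ.le
      have : Z.card < b + 1 := by exact_mod_cast this
      omega
    · intro y hy
      simpa [Z] using hy
  have h1 : ∑ y, w y ≤ ∑ y, w' y := hmin hw'P
  have h2 : ∑ y, w' y < ∑ y, w y :=
    Finset.sum_lt_sum (fun y _ => hw'w y) ⟨x, Finset.mem_univ _, by simpa [w'] using htw⟩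
  linarith

lemma forster_robust {X Y : Type*} [Fintype X] [DecidableEq X] [Nonempty X] [Fintype Y] [Nonempty Y]
    (V : Submodule ℝ (X → ℝ)) (r : ℕ) (hr : 1 ≤ r) (hrV : Module.finrank ℝ V ≤ r)
    (hrob : ∀ f ∈ V, ∀ Z : Finset X, Z.card ≤ 2 * r ^ 2 + 1 → (∀ x ∉ Z, f x = 0) → f = 0)
    (H : X → Y → ℝ)
    (hH : ∀ a : Y → ℝ, ∑ x, (∑ y, H x y * a y) ^ 2 ≤ (Fintype.card Y : ℝ) * ∑ y, a y ^ 2)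
    (f : Y → X → ℝ) (hf : ∀ y, f y ∈ V) (hf0 : ∀ y x, f y x ≠ 0)
    (hs : ∀ x y, H x y * f y x = |f y x|) : False := by
  have hr0 : (0 : ℝ) < r := by exact_mod_cast hr
  set τ : ℝ := 1 / (2 * r) with hτ
  have hτ0 : 0 < τ := by positivity
  obtain ⟨w, hw0, hdef, hlev⟩ := exists_weights V (2 * r ^ 2) τ hτ0 (by
    have h1 : (Module.finrank ℝ V : ℝ) ≤ r := by exact_mod_cast hrV
    have h2 : τ * ((2 * r ^ 2 : ℕ) + 1) = r + τ := by
      push_cast; rw [hτ]; field_simp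
    linarith) hrob
  obtain ⟨q, hq, e, he, hrep⟩ := trace_bd' V w hw0
  let c : Y → ℝ := fun y => ∑ x, w x * f y x ^ 2
  have hc : ∀ y, 0 < c y := by
    intro y
    refine lt_of_le_of_ne (Finset.sum_nonneg fun x _ => mul_nonneg (hw0 x) (sq_nonneg _)) ?_
    intro h0
    have := hdef _ (hf y) h0.symm
    exact hf0 y (Classical.arbitrary X) (by rw [this]; rfl)
  choose a ha1 ha2 using fun y => hrep (f y) (hf y)
  -- normalized
  let h : Y → X → ℝ := fun y x => √(w x) * f y x / √(c y)
  let α : Y → Fin q → ℝ := fun y j => a y j / √(c y)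
  have hα : ∀ y, ∑ j, α y j ^ 2 = 1 := by
    intro y
    simp only [α, div_pow, ← Finset.sum_div, Real.sq_sqrt (hc y).le, ha2]
    exact div_self (hc y).ne'
  have hh2 : ∀ y x, h y x ^ 2 = w x * f y x ^ 2 / c y := by
    intro y x
    simp only [h, div_pow, mul_pow, Real.sq_sqrt (hc y).le, Real.sq_sqrt (hw0 x)]
  have hhτ : ∀ y x, |h y x| ≤ √τ := by
    intro y x
    apply Real.abs_le_sqrt
    rw [hh2, div_le_iff₀ (hc y)]
    exact hlev _ (hf y) x
  have hhsum : ∀ y, ∑ x, h y x ^ 2 = 1 := by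
    intro y
    simp only [hh2, ← Finset.sum_div]
    exact div_self (hc y).ne'
  have hHh : ∀ x y, H x y * h y x = |h y x| := by
    intro x y
    simp only [h, abs_div, abs_mul, abs_of_nonneg (Real.sqrt_nonneg _), ← hs x y]
    ring
  have hrow : ∀ y, 1 ≤ √τ * ∑ x, H x y * h y x := by
    intro y
    rw [← hhsum y, Finset.mul_sum]
    refine Finset.sum_le_sum fun x _ => ?_
    rw [hHh, ← sq_abs, sq]
    exact mul_le_mul_of_nonneg_right (hhτ y x) (abs_nonneg _)
  have hexp : ∀ y x, h y x = ∑ j, α y j * e j x := by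
    intro y x
    simp only [h, α, ha1, Finset.sum_div]
    exact Finset.sum_congr rfl fun j _ => by ring
  set L := ∑ y, ∑ x, H x y * h y x with hL
  set n : ℝ := (Fintype.card Y : ℝ) with hn
  have hn0 : 0 < n := by rw [hn]; exact_mod_cast Fintype.card_pos
  have hnL : n ≤ √τ * L := by
    calc n = ∑ y : Y, (1 : ℝ) := by simp [hn]
      _ ≤ ∑ y, √τ * ∑ x, H x y * h y x := Finset.sum_le_sum fun y _ => hrow y
      _ = _ := by rw [hL, Finset.mul_sum]
  have hLeq : L = ∑ p : Fin q × X, e p.1 p.2 * ∑ y, H p.2 y * α y p.1 := by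
    rw [Fintype.sum_prod_type, hL]
    simp only [hexp, Finset.mul_sum]
    rw [Finset.sum_comm]
    rw [Finset.sum_comm (s := (Finset.univ : Finset (Fin q)))]
    refine Finset.sum_congr rfl fun x _ => ?_
    rw [Finset.sum_comm]
    refine Finset.sum_congr rfl fun j _ => Finset.sum_congr rfl fun y _ => by ring
  have hL2 : L ^ 2 ≤ q * (n * n) := by
    rw [hLeq]
    refine (Finset.sum_mul_sq_le_sq_mul_sq _ _ _).trans ?_
    rw [Fintype.sum_prod_type, Fintype.sum_prod_type]
    simp only [he]
    have h1 : ∑ j : Fin q, ∑ x, (∑ y, H x y * α y j) ^ 2 ≤ n * n := by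
      calc _ ≤ ∑ j : Fin q, n * ∑ y, α y j ^ 2 := Finset.sum_le_sum fun j _ => hH _
        _ = n * ∑ y, ∑ j : Fin q, α y j ^ 2 := by rw [← Finset.mul_sum, Finset.sum_comm]
        _ = n * n := by simp [hα, hn]
    simp only [Finset.sum_const, Finset.card_univ, Fintype.card_fin, nsmul_eq_mul, mul_one]
    exact mul_le_mul_of_nonneg_left h1 (by positivity)
  have h3 : n ^ 2 ≤ τ * L ^ 2 := by
    calc n ^ 2 ≤ (√τ * L) ^ 2 := pow_le_pow_left₀ hn0.le hnL 2
      _ = τ * L ^ 2 := by rw [mul_pow, Real.sq_sqrt hτ0.le]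
  have h4 : (q : ℝ) ≤ r := by exact_mod_cast hq.trans hrV
  have h5 : τ * L ^ 2 ≤ τ * (r * (n * n)) := by
    refine mul_le_mul_of_nonneg_left (hL2.trans ?_) hτ0.le
    exact mul_le_mul_of_nonneg_right h4 (by positivity)
  have h6 : τ * (r * (n * n)) = n ^ 2 / 2 := by rw [hτ]; field_simp
  nlinarith [sq_pos_of_pos hn0]

lemma forster {X Y : Type*} [Fintype X] [DecidableEq X] [Fintype Y] [Nonempty Y]
    (V : Submodule ℝ (X → ℝ)) (r : ℕ) (hr : 1 ≤ r) (hrV : Module.finrank ℝ V ≤ r)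
    (H : X → Y → ℝ)
    (hH : ∀ a : Y → ℝ, ∑ x, (∑ y, H x y * a y) ^ 2 ≤ (Fintype.card Y : ℝ) * ∑ y, a y ^ 2)
    (f : Y → X → ℝ) (hf : ∀ y, f y ∈ V) (hf0 : ∀ y x, f y x ≠ 0)
    (hs : ∀ x y, H x y * f y x = |f y x|) : Fintype.card X ≤ (2 * r ^ 2 + 2) * r := by
  by_contra hcon
  push Not at hcon
  let K : Finset X → Submodule ℝ (X → ℝ) := fun Z =>
    V ⊓ LinearMap.ker (LinearMap.funLeft ℝ ℝ (fun z : Z => (z : X)))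
  have hK : ∀ Z g, g ∈ K Z ↔ g ∈ V ∧ ∀ x ∈ Z, g x = 0 := by
    intro Z g
    simp [K, funext_iff, LinearMap.funLeft_apply]
  obtain ⟨Z, -, hZ⟩ := Finset.exists_max_image (Finset.univ : Finset (Finset X))
    (fun Z => (2 * r ^ 2 + 2) * Module.finrank ℝ (K Z) + Z.card) ⟨∅, Finset.mem_univ _⟩
  have hZne : Z.Nonempty := by
    rw [Finset.nonempty_iff_ne_empty]
    rintro rfl
    have h1 := hZ Finset.univ (Finset.mem_univ _)
    have h2 : Module.finrank ℝ (K ∅) ≤ r :=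
      (Submodule.finrank_mono inf_le_left).trans hrV
    have h3 := Nat.mul_le_mul_left (2 * r ^ 2 + 2) h2
    simp only [Finset.card_univ, Finset.card_empty] at h1
    omega
  have : Nonempty Z := hZne.to_subtype
  let R : (X → ℝ) →ₗ[ℝ] (Z → ℝ) := LinearMap.funLeft ℝ ℝ (fun z : Z => (z : X))
  refine forster_robust (X := Z) (Y := Y) (V.map R) r hr ((Submodule.finrank_map_le _ _).trans hrV)
    ?_ (fun x y => H x y) ?_ (fun y => R (f y)) (fun y => Submodule.mem_map_of_mem (hf y))
    (fun y x => hf0 y x) (fun x y => hs x y)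
  · rintro _ ⟨g, hg, rfl⟩ U hU hgU
    by_contra hne
    obtain ⟨z, hz⟩ := Function.ne_iff.1 hne
    let Z' : Finset X := Z \ U.map (Function.Embedding.subtype _)
    have hcard : Z.card ≤ Z'.card + U.card := by
      have := Finset.card_le_card_sdiff_add_card (s := Z) (t := U.map (Function.Embedding.subtype _))
      simpa using this
    have hlt : K Z < K Z' := by
      refine lt_of_le_of_ne ?_ ?_
      · intro k hk
        rw [hK] at hk ⊢
        exact ⟨hk.1, fun x hx => hk.2 x (Finset.mem_sdiff.1 hx).1⟩
      · intro heq
        have hgm : g ∈ K Z' := by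
          rw [hK]
          refine ⟨hg, fun x hx => ?_⟩
          obtain ⟨hx1, hx2⟩ := Finset.mem_sdiff.1 hx
          exact hgU ⟨x, hx1⟩ (fun hxU => hx2 (Finset.mem_map.2 ⟨⟨x, hx1⟩, hxU, rfl⟩))
        rw [← heq, hK] at hgm
        exact hz (hgm.2 z z.2)
    have h1 := Submodule.finrank_lt_finrank_of_lt hlt
    have h2 := hZ Z' (Finset.mem_univ _)
    have h3 := Nat.mul_le_mul_left (2 * r ^ 2 + 2) (Nat.succ_le_of_lt h1)
    rw [Nat.mul_succ] at h3
    omega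
  · intro a
    refine le_trans ?_ (hH a)
    rw [Finset.sum_coe_sort Z (fun x => (∑ y, H x y * a y) ^ 2)] 
    exact Finset.sum_le_sum_of_subset_of_nonneg (Finset.subset_univ _)
      (fun _ _ _ => sq_nonneg _)

/-- character -/
def chr {ι : Type*} [DecidableEq ι] (σ A : Finset ι) : ℝ := ∏ i ∈ A, if i ∈ σ then 1 else -1

lemma chr_sq {ι : Type*} [DecidableEq ι] (σ A : Finset ι) : chr σ A * chr σ A = 1 := by
  unfold chr
  rw [← Finset.prod_mul_distrib]
  apply Finset.prod_eq_one
  intro i _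
  split_ifs <;> norm_num

lemma chr_orth {ι : Type*} [Fintype ι] [DecidableEq ι] (A B : Finset ι) (hAB : A ≠ B) :
    ∑ σ : Finset ι, chr σ A * chr σ B = 0 := by
  have : ∃ i, ¬ (i ∈ A ↔ i ∈ B) := by
    by_contra h
    push Not at h
    exact hAB (Finset.ext h)
  obtain ⟨i, hi⟩ := this
  have hflip : ∀ σ A : Finset ι, chr (symmDiff σ {i}) A = (if i ∈ A then -1 else 1) * chr σ A := by
    intro σ A
    unfold chr
    by_cases hA : i ∈ A
    · rw [← Finset.mul_prod_erase A _ hA, ← Finset.mul_prod_erase A _ hA]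
      have : ∀ j ∈ A.erase i, (if j ∈ symmDiff σ {i} then (1:ℝ) else -1) = if j ∈ σ then 1 else -1 := by
        intro j hj
        have := Finset.ne_of_mem_erase hj
        simp [Finset.mem_symmDiff, this]
      rw [Finset.prod_congr rfl this]
      by_cases hσ : i ∈ σ <;> simp [Finset.mem_symmDiff, hσ, hA]
    · simp only [hA, if_false, one_mul]
      refine Finset.prod_congr rfl fun j hj => ?_
      have : j ≠ i := by rintro rfl; exact hA hj
      simp [Finset.mem_symmDiff, this]
  have h2 : ∑ σ : Finset ι, chr σ A * chr σ B =
      ∑ σ : Finset ι, chr (symmDiff σ {i}) A * chr (symmDiff σ {i}) B :=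
    (Equiv.sum_comp (Function.Involutive.toPerm (fun σ : Finset ι => symmDiff σ {i})
      (fun σ => by simp)) (fun σ => chr σ A * chr σ B)).symm
  have h3 : ∀ σ, chr (symmDiff σ {i}) A * chr (symmDiff σ {i}) B = -(chr σ A * chr σ B) := by
    intro σ
    rw [hflip, hflip]
    by_cases hA : i ∈ A <;> by_cases hB : i ∈ B <;> simp [hA, hB] at hi ⊢
  simp only [h3, Finset.sum_neg_distrib] at h2
  linarith

lemma chr_parseval {ι : Type*} [Fintype ι] [DecidableEq ι] (a : Finset ι → ℝ) :
    ∑ σ, (∑ A, chr σ A * a A) ^ 2 = (Fintype.card (Finset ι) : ℝ) * ∑ A, a A ^ 2 := by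
  have h1 : ∀ σ, (∑ A, chr σ A * a A) ^ 2 = ∑ A, ∑ B, a A * a B * (chr σ A * chr σ B) := by
    intro σ
    rw [sq, Finset.sum_mul_sum]
    refine Finset.sum_congr rfl fun A _ => Finset.sum_congr rfl fun B _ => by ring
  simp only [h1]
  rw [Finset.sum_comm, Finset.mul_sum]
  refine Finset.sum_congr rfl fun A _ => ?_
  rw [Finset.sum_comm]
  simp only [← Finset.mul_sum]
  rw [Finset.sum_eq_single A]
  · simp only [chr_sq, Finset.sum_const, Finset.card_univ, nsmul_eq_mul]
    ring
  · intro B _ hB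
    rw [chr_orth A B hB.symm, mul_zero]
  · simp

lemma shatter_rank {ι : Type*} [Fintype ι] [DecidableEq ι] (y : Finset ι → ι → ℝ)
    (hpos : ∀ σ, ∀ i ∈ σ, 0 < y σ i) (hneg : ∀ σ, ∀ i ∉ σ, y σ i < 0)
    (V : Submodule ℝ (Finset ι → ℝ)) (r : ℕ) (hr : 1 ≤ r) (hrV : Module.finrank ℝ V ≤ r)
    (hV : ∀ A : Finset ι, (fun σ => ∏ i ∈ A, y σ i) ∈ V) :
    2 ^ Fintype.card ι ≤ (2 * r ^ 2 + 2) * r := by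
  rw [← Fintype.card_finset]
  refine forster V r hr hrV (fun σ A => chr σ A) (fun a => (chr_parseval a).le)
    (fun A σ => ∏ i ∈ A, y σ i) hV ?_ ?_
  · intro A σ
    refine Finset.prod_ne_zero_iff.2 fun i _ => ?_
    by_cases h : i ∈ σ
    · exact (hpos σ i h).ne'
    · exact (hneg σ i h).ne
  · intro σ A
    simp only [chr]
    rw [← Finset.prod_mul_distrib, Finset.abs_prod]
    refine Finset.prod_congr rfl fun i _ => ?_
    by_cases h : i ∈ σ
    · simp [h, abs_of_pos (hpos σ i h)]
    · simp [h, abs_of_neg (hneg σ i h)]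

/-- affine functions -/
def affGen (K : Type*) : Option K → ((K → ℝ) → ℝ) := fun o z => o.elim 1 z

/-- affine functions -/
def affSp (K : Type*) : Submodule ℝ ((K → ℝ) → ℝ) := Submodule.span ℝ (Set.range (affGen K))

lemma affSp_pow_le (K : Type*) (D : ℕ) : (affSp K) ^ D ≤
    Submodule.span ℝ (Set.range fun s : Sym (Option K) D => (s.1.map (affGen K)).prod) := by
  rw [affSp, Submodule.span_pow]
  apply Submodule.span_mono
  intro g hg
  rw [Set.mem_pow] at hg
  obtain ⟨f, rfl⟩ := hg
  choose o ho using fun i => (f i).2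
  refine ⟨⟨(List.ofFn o : Multiset (Option K)), by simp⟩, ?_⟩
  simp only [Multiset.map_coe, Multiset.prod_coe, List.map_ofFn]
  congr 2
  funext i
  exact ho i

lemma affSp_finite (K : Type*) [Fintype K] [DecidableEq K] (D : ℕ) :
    Module.Finite ℝ ↥((affSp K) ^ D) ∧
    Module.finrank ℝ ↥((affSp K) ^ D) ≤ (Fintype.card K + D).choose D := by
  have hfin : Module.Finite ℝ (Submodule.span ℝ
      (Set.range fun s : Sym (Option K) D => (s.1.map (affGen K)).prod)) :=
    FiniteDimensional.span_of_finite ℝ (Set.finite_range _)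
  refine ⟨Submodule.finiteDimensional_of_le (affSp_pow_le K D), ?_⟩
  refine (Submodule.finrank_mono (affSp_pow_le K D)).trans ?_
  refine (finrank_range_le_card (R := ℝ)
    (fun s : Sym (Option K) D => (s.1.map (affGen K)).prod)).trans ?_
  rw [Sym.card_sym_eq_choose, Fintype.card_option]
  apply le_of_eq
  congr 1
  omega

lemma one_mem_affSp (K : Type*) : (1 : (K → ℝ) → ℝ) ∈ affSp K :=
  Submodule.subset_span ⟨none, rfl⟩

lemma coord_mem_affSp (K : Type*) (k : K) : (fun z : K → ℝ => z k) ∈ affSp K :=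
  Submodule.subset_span ⟨some k, rfl⟩

lemma one_mem_affSp_pow (K : Type*) (D : ℕ) : (1 : (K → ℝ) → ℝ) ∈ (affSp K) ^ D := by
  have := Submodule.pow_mem_pow (affSp K) (one_mem_affSp K) D
  simpa using this

lemma affSp_pow_mono (K : Type*) {a b : ℕ} (h : a ≤ b) : (affSp K) ^ a ≤ (affSp K) ^ b := by
  obtain ⟨c, rfl⟩ := Nat.exists_eq_add_of_le h
  intro f hf
  rw [pow_add]
  simpa using Submodule.mul_mem_mul hf (one_mem_affSp_pow K c)

lemma prod_mem_affSp {K ι : Type*} (a : ℕ) (p : ι → (K → ℝ) → ℝ) (A : Finset ι)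
    (hp : ∀ i ∈ A, p i ∈ affSp K ^ a) : (∏ i ∈ A, p i) ∈ affSp K ^ (a * A.card) := by
  classical
  induction A using Finset.induction_on with
  | empty => simpa using one_mem_affSp_pow K 0
  | insert i A hi ih =>
    rw [Finset.prod_insert hi, Finset.card_insert_of_notMem hi, Nat.mul_add, mul_one, add_comm,
      pow_add]
    exact Submodule.mul_mem_mul (hp i (by simp)) (ih fun j hj => hp j (by simp [hj]))

/-- main VC bound -/
lemma no_shatter {K ι : Type*} [Fintype K] [DecidableEq K] [Fintype ι] [DecidableEq ι] (d : ℕ)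
    (p : ι → (K → ℝ) → ℝ) (hp : ∀ i, p i ∈ affSp K ^ d) (z : Finset ι → K → ℝ)
    (hz : ∀ σ i, i ∈ σ ↔ 0 < p i (z σ)) (r : ℕ)
    (hr : r = (Fintype.card K + d * Fintype.card ι).choose (d * Fintype.card ι)) :
    2 ^ Fintype.card ι ≤ (2 * r ^ 2 + 2) * r := by
  -- choose a small shift
  obtain ⟨δ, hδ0, hδ⟩ : ∃ δ : ℝ, 0 < δ ∧ ∀ σ i, i ∈ σ → δ < p i (z σ) := by
    let F : Finset (Finset ι × ι) := Finset.univ.filter fun q => q.2 ∈ q.1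
    by_cases hF : F.Nonempty
    · obtain ⟨q, hq, hmin⟩ := Finset.exists_min_image F (fun q => p q.2 (z q.1)) hF
      have h0 : 0 < p q.2 (z q.1) := (hz _ _).1 (by simpa [F] using hq)
      refine ⟨p q.2 (z q.1) / 2, by linarith, fun σ i hi => ?_⟩
      have := hmin (σ, i) (by simpa [F] using hi)
      simp only at this
      linarith
    · refine ⟨1, one_pos, fun σ i hi => ?_⟩
      exact absurd ⟨(σ, i), by simpa [F] using hi⟩ hF
  obtain ⟨hfin, hrank⟩ := affSp_finite K (d * Fintype.card ι)
  refine shatter_rank (fun σ i => p i (z σ) - δ) (fun σ i hi => by linarith [hδ σ i hi]) ?_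
    ((affSp K ^ (d * Fintype.card ι)).map (LinearMap.funLeft ℝ ℝ z)) r ?_ ?_ ?_
  · intro σ i hi
    have := (hz σ i).not.1 hi
    push Not at this
    linarith
  · rw [hr]
    exact Nat.choose_pos (by omega)
  · rw [hr]
    exact (Submodule.finrank_map_le _ _).trans hrank
  · intro A
    refine ⟨∏ i ∈ A, (p i - δ • 1), ?_, ?_⟩
    · refine affSp_pow_mono K (Nat.mul_le_mul_left d (Finset.card_le_univ A)) ?_
      refine prod_mem_affSp d _ A fun i _ => ?_
      exact Submodule.sub_mem _ (hp i) (Submodule.smul_mem _ _ (one_mem_affSp_pow K d))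
    · funext σ
      simp [LinearMap.funLeft_apply, Finset.prod_apply]

lemma exists_vc_const (d : ℕ) : ∃ C : ℕ, 1 ≤ C ∧ ∀ k r : ℕ, 1 ≤ k →
    r = (k + d * (C * k)).choose (d * (C * k)) → (2 * r ^ 2 + 2) * r < 2 ^ (C * k) := by
  have ht := tendsto_pow_const_div_const_pow_of_one_lt 3 (one_lt_two : (1 : ℝ) < 2)
  have hpos : (0 : ℝ) < 1 / (108 * (1 + d) ^ 3) := by positivity
  obtain ⟨C, hC, hC1⟩ := ((ht.eventually (gt_mem_nhds hpos)).and
    (Filter.eventually_ge_atTop 1)).exists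
  refine ⟨C, hC1, fun k r hk hr => ?_⟩
  have hC1' : (1 : ℝ) ≤ C := by exact_mod_cast hC1
  have hbase : 108 * (1 + (d : ℝ) * C) ^ 3 < 2 ^ C := by
    rw [div_lt_div_iff₀ (by positivity) (by positivity)] at hC
    have h1 : (1 + (d : ℝ) * C) ^ 3 ≤ ((1 + d) * C) ^ 3 := by
      apply pow_le_pow_left₀ (by positivity)
      nlinarith
    rw [mul_pow] at h1
    nlinarith
  have hr1 : 1 ≤ r := by rw [hr]; exact Nat.choose_pos (by omega)
  have hrle : (r : ℝ) ≤ (3 * (1 + d * C)) ^ k := by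
    have h1 : r = (k + d * (C * k)).choose k := by
      rw [hr, Nat.choose_symm_add]
    have h2 := Nat.choose_le_pow_div (α := ℝ) k (k + d * (C * k))
    rw [← h1] at h2
    have h3 : ((k + d * (C * k) : ℕ) : ℝ) = (1 + d * C) * k := by push_cast; ring
    rw [h3, mul_pow, mul_div_assoc] at h2
    have h4 := Real.pow_div_factorial_le_exp (x := (k : ℝ)) (by positivity) k
    have h5 : Real.exp k ≤ 3 ^ k := by
      have : Real.exp (k : ℝ) = Real.exp 1 ^ k := by rw [← Real.exp_nat_mul]; simp
      rw [this]
      exact pow_le_pow_left₀ (Real.exp_pos _).le (by linarith [Real.exp_one_lt_d9]) k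
    calc (r : ℝ) ≤ _ := h2
      _ ≤ (1 + (d : ℝ) * C) ^ k * 3 ^ k :=
        mul_le_mul_of_nonneg_left (h4.trans h5) (by positivity)
      _ = _ := by rw [← mul_pow]; ring
  have hr1' : (1 : ℝ) ≤ r := by exact_mod_cast hr1
  have hfin : (((2 * r ^ 2 + 2) * r : ℕ) : ℝ) < ((2 ^ (C * k) : ℕ) : ℝ) := by
    push_cast
    calc (2 * (r : ℝ) ^ 2 + 2) * r ≤ 4 * r ^ 3 := by
            have hsq : (1 : ℝ) ≤ (r : ℝ) ^ 2 := one_le_pow₀ hr1'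
            nlinarith [mul_nonneg (zero_le_one.trans hr1') (sub_nonneg.2 hsq)]
      _ ≤ (4 : ℝ) ^ k * ((3 * (1 + (d : ℝ) * C)) ^ k) ^ 3 := by
        apply mul_le_mul
        · exact le_self_pow₀ (by norm_num) (by omega)
        · exact pow_le_pow_left₀ (by positivity) hrle 3
        · positivity
        · positivity
      _ = (108 * (1 + (d : ℝ) * C) ^ 3) ^ k := by
        rw [← pow_mul, mul_comm k 3, pow_mul, ← mul_pow]; ring
      _ < (2 ^ C) ^ k := pow_lt_pow_left₀ hbase (by positivity) (by omega)
      _ = _ := by rw [pow_mul]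
  exact_mod_cast hfin

open Classical in
lemma sauer_bd {K ι : Type*} [Fintype K] [Fintype ι] (d C : ℕ)
    (hC : ∀ k r : ℕ, 1 ≤ k →
      r = (k + d * (C * k)).choose (d * (C * k)) → (2 * r ^ 2 + 2) * r < 2 ^ (C * k))
    (p : ι → (K → ℝ) → ℝ) (hp : ∀ i, p i ∈ affSp K ^ d) :
    (Finset.univ.filter fun P : Finset ι => ∃ z, P = Finset.univ.filter fun i => 0 < p i z).card ≤
      ∑ j ∈ Finset.range (C * Fintype.card K + 1), (Fintype.card ι).choose j := by
  set 𝒜 := Finset.univ.filter fun P : Finset ι => ∃ z, P = Finset.univ.filter fun i => 0 < p i z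
    with h𝒜
  rcases Nat.eq_zero_or_pos (Fintype.card K) with hk | hk
  · have : IsEmpty K := Fintype.card_eq_zero_iff.1 hk
    have h1 : 𝒜.card ≤ 1 := by
      rw [Finset.card_le_one]
      intro P hP Q hQ
      simp only [h𝒜, Finset.mem_filter, Finset.mem_univ, true_and] at hP hQ
      obtain ⟨z, rfl⟩ := hP
      obtain ⟨z', rfl⟩ := hQ
      rw [Subsingleton.elim z z']
    rw [hk]
    simpa using h1
  have hvc : 𝒜.vcDim ≤ C * Fintype.card K := by
    refine Finset.sup_le fun s hs => ?_
    rw [Finset.mem_shatterer] at hs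
    by_contra hlt
    push Not at hlt
    obtain ⟨t, hts, htc⟩ := Finset.exists_subset_card_eq hlt.le
    have ht := hs.mono_right hts
    have hz : ∀ σ : Finset t, ∃ z : K → ℝ, ∀ i, i ∈ σ ↔ 0 < p i.1 z := by
      intro σ
      obtain ⟨P, hP, hPt⟩ := ht (t := σ.map (Function.Embedding.subtype _))
        (fun x hx => by
          obtain ⟨y, _, rfl⟩ := Finset.mem_map.1 hx
          exact y.2)
      simp only [h𝒜, Finset.mem_filter, Finset.mem_univ, true_and] at hP
      obtain ⟨z, rfl⟩ := hP
      refine ⟨z, fun i => ?_⟩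
      have := Finset.ext_iff.1 hPt i.1
      simpa using this.symm
    choose z hz using hz
    have hcard : Fintype.card t = C * Fintype.card K := by simp [htc]
    have h1 := no_shatter (K := K) (ι := t) d (fun i => p i.1) (fun i => hp i.1) z hz _ rfl
    rw [hcard] at h1
    exact absurd h1 (not_le.2 (hC _ _ hk rfl))
  refine (Finset.card_le_card_shatterer 𝒜).trans (Finset.card_shatterer_le_sum_vcDim.trans ?_)
  rw [← Nat.range_succ_eq_Iic]
  exact Finset.sum_le_sum_of_subset (Finset.range_mono (by omega))

lemma ball_bd (N q : ℕ) (ε a : ℝ) (h0 : 0 < ε) (h1 : ε < 1 / 2) (hq : (q : ℝ) ≤ a * ε * N) :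
    ((∑ j ∈ Finset.range (q + 1), N.choose j : ℕ) : ℝ) ≤
      (2 : ℝ) ^ ((N : ℝ) * (a + 2) * ε * Real.logb 2 (1 / ε)) := by
  have hlog : 1 ≤ Real.logb 2 (1 / ε) := by
    rw [Real.le_logb_iff_rpow_le (by norm_num) (by positivity), Real.rpow_one,
      le_div_iff₀ h0]
    linarith
  have h2 : (∑ j ∈ Finset.range (q + 1), (N.choose j : ℝ)) * ε ^ q ≤ (1 + ε) ^ N := by
    rw [add_comm (1 : ℝ) ε, add_pow, Finset.sum_mul]
    simp only [one_pow, mul_one]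
    calc ∑ j ∈ Finset.range (q + 1), (N.choose j : ℝ) * ε ^ q
        ≤ ∑ j ∈ Finset.range (q + 1), ε ^ j * (N.choose j : ℝ) := by
          refine Finset.sum_le_sum fun j hj => ?_
          rw [mul_comm]
          refine mul_le_mul_of_nonneg_right ?_ (by positivity)
          exact pow_le_pow_of_le_one h0.le (by linarith)
            (Nat.lt_succ_iff.1 (Finset.mem_range.1 hj))
      _ ≤ ∑ j ∈ Finset.range (max q N + 1), ε ^ j * (N.choose j : ℝ) :=
          Finset.sum_le_sum_of_subset_of_nonneg (Finset.range_mono (by omega))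
            (fun _ _ _ => by positivity)
      _ = ∑ j ∈ Finset.range (N + 1), ε ^ j * (N.choose j : ℝ) := by
          symm
          refine Finset.sum_subset (Finset.range_mono (by omega)) fun j _ hj => ?_
          rw [Nat.choose_eq_zero_of_lt (by simpa using hj)]
          simp
  have h3 : (1 + ε) ^ N ≤ (2 : ℝ) ^ (2 * ε * N) := by
    have h4 : 1 + ε ≤ (2 : ℝ) ^ (2 * ε) := by
      rw [Real.rpow_def_of_pos (by norm_num)]
      have := Real.add_one_le_exp (Real.log 2 * (2 * ε))
      nlinarith [Real.log_two_gt_d9]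
    calc (1 + ε) ^ N ≤ ((2 : ℝ) ^ (2 * ε)) ^ N := pow_le_pow_left₀ (by positivity) h4 N
      _ = _ := by rw [← Real.rpow_natCast, ← Real.rpow_mul (by norm_num)]
  have h5 : (2 : ℝ) ^ (-((q : ℝ) * Real.logb 2 (1 / ε))) = ε ^ q := by
    rw [one_div, Real.logb_inv, mul_neg, neg_neg, mul_comm, Real.rpow_mul (by norm_num),
      Real.rpow_logb (by norm_num) (by norm_num) h0, Real.rpow_natCast]
  push_cast
  have h6 : (∑ j ∈ Finset.range (q + 1), (N.choose j : ℝ)) ≤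
      (2 : ℝ) ^ (2 * ε * N + (q : ℝ) * Real.logb 2 (1 / ε)) := by
    have hεq : 0 < ε ^ q := by positivity
    rw [← mul_le_mul_iff_left₀ hεq]
    refine h2.trans (h3.trans (le_of_eq ?_))
    rw [← h5, ← Real.rpow_add (by norm_num)]
    congr 1; ring
  refine h6.trans (Real.rpow_le_rpow_of_exponent_le (by norm_num) ?_)
  have hεN : 0 ≤ 2 * ε * N := by positivity
  nlinarith [mul_le_mul_of_nonneg_right hq (by linarith : 0 ≤ Real.logb 2 (1 / ε)),
    mul_le_mul_of_nonneg_left hlog hεN]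

lemma card_small {ι : Type*} [Fintype ι] [DecidableEq ι] (q : ℕ) :
    (Finset.univ.filter fun D : Finset ι => D.card ≤ q).card ≤
      ∑ j ∈ Finset.range (q + 1), (Fintype.card ι).choose j := by
  have : (Finset.univ.filter fun D : Finset ι => D.card ≤ q) ⊆
      (Finset.range (q + 1)).biUnion fun j => Finset.powersetCard j Finset.univ := by
    intro D hD
    simp only [Finset.mem_filter, Finset.mem_univ, true_and] at hD
    simp [Finset.mem_powersetCard]
    omega
  refine (Finset.card_le_card this).trans (Finset.card_biUnion_le.trans ?_)
  simp [Finset.card_powersetCard]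

lemma tensorRankLE_mono {d : ℕ} {n : Fin d → ℕ} (T : ((i : Fin d) → Fin (n i)) → ℝ) (m M : ℕ)
    (hd : 0 < d ∨ M = 0) (hm : m ≤ M) (h : tensorRankLE T m) : tensorRankLE T M := by
  obtain ⟨t, rfl⟩ := Nat.exists_eq_add_of_le hm
  rcases hd with hd | hd
  · obtain ⟨u, hu⟩ := h
    refine ⟨Fin.append u (fun _ _ _ => 0), fun I => ?_⟩
    rw [hu, Fin.sum_univ_add]
    have : ∏ i : Fin d, (0 : ℝ) = 0 := by simp; omega
    simp only [Fin.append_left, Fin.append_right, this]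
    simp
  · have h1 : m = 0 := by omega
    have h2 : t = 0 := by omega
    subst h1 h2
    exact h

/-- For every `d` there are `c(d), ε₀(d) > 0` such that for every `ε ∈ (0, ε₀)` and all
`n₁, …, n_d`, with `N = n₁⋯n_d`, there is a set `S*` of signum tensors of cardinality at
least `2^N − 2^{N c ε log₂(1/ε)}` such that every tensor `T` with nonzero entries and
sign pattern in `S*` is `ℓ_1`-far from all tensors of rank at most `ε N / max n_j`:
`∑_I |T_I − T̃_I| ≥ ε N · min_I |T_I|`. -/
theorem almost_all_sign_tensors_rigid (d : ℕ) :
    ∃ c : ℝ, 0 < c ∧ ∃ ε₀ : ℝ, 0 < ε₀ ∧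
      ∀ ε : ℝ, 0 < ε → ε < ε₀ → ∀ n : Fin d → ℕ,
        ∃ Sstar : Set (((i : Fin d) → Fin (n i)) → ℝ),
          (∀ S ∈ Sstar, IsSignTensor S) ∧
          (2 : ℝ) ^ (∏ i, n i : ℕ) -
              (2 : ℝ) ^ ((∏ i, n i : ℕ) * c * ε * Real.logb 2 (1 / ε)) ≤
            (Nat.card Sstar : ℝ) ∧
          ∀ T : ((i : Fin d) → Fin (n i)) → ℝ, (∀ I, T I ≠ 0) →
            (fun I => Real.sign (T I)) ∈ Sstar →
            ∀ T' : ((i : Fin d) → Fin (n i)) → ℝ,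
              (∃ m : ℕ, (m : ℝ) ≤ ε * (∏ i, n i : ℕ) / (Finset.univ.sup n : ℕ) ∧
                tensorRankLE T' m) →
              ε * (∏ i, n i : ℕ) * (⨅ I, |T I|) ≤ ∑ I, |T I - T' I| := by
  classical
  obtain ⟨C, hC1, hC⟩ := exists_vc_const d
  refine ⟨(C * d + 2) + (1 + 2), by positivity, 1 / 2, by norm_num, fun ε h0 hε n => ?_⟩
  set N := ∏ i, n i with hN
  set mx := Finset.univ.sup n with hmx
  let ι := (i : Fin d) → Fin (n i)
  have hcard : Fintype.card ι = N := by simp [ι, hN]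
  let m0 := ⌊ε * (N : ℝ) / (mx : ℝ)⌋₊
  have hm0 : (m0 : ℝ) ≤ ε * (N : ℝ) / (mx : ℝ) := Nat.floor_le (by positivity)
  let K := Fin m0 × (Σ i : Fin d, Fin (n i))
  let p : ι → (K → ℝ) → ℝ := fun I z => ∑ s, ∏ i, z (s, ⟨i, I i⟩)
  have hp : ∀ I, p I ∈ affSp K ^ d := by
    intro I
    have : p I = ∑ s, ∏ i : Fin d, (fun z : K → ℝ => z (s, ⟨i, I i⟩)) := by
      funext z
      simp [p]
    rw [this]
    refine Submodule.sum_mem _ fun s _ => ?_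
    have := prod_mem_affSp (K := K) 1 (fun i : Fin d => (fun z : K → ℝ => z (s, ⟨i, I i⟩)))
      Finset.univ (fun i _ => by rw [pow_one]; exact coord_mem_affSp K _)
    simpa using this
  have hk : (Fintype.card K : ℝ) ≤ d * ε * N := by
    have h1 : Fintype.card K ≤ m0 * (d * mx) := by
      simp only [K, Fintype.card_prod, Fintype.card_fin, Fintype.card_sigma]
      refine Nat.mul_le_mul_left _ ?_
      calc ∑ i, n i ≤ ∑ _i : Fin d, mx :=
            Finset.sum_le_sum fun i hi => Finset.le_sup (f := n) hi
        _ = d * mx := by simp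
    have h2 : (m0 : ℝ) * mx ≤ ε * N := by
      rcases Nat.eq_zero_or_pos mx with h | h
      · rw [h]; simp; positivity
      · rwa [le_div_iff₀ (by exact_mod_cast h)] at hm0
    calc (Fintype.card K : ℝ) ≤ ((m0 * (d * mx) : ℕ) : ℝ) := by exact_mod_cast h1
      _ = d * (m0 * mx) := by push_cast; ring
      _ ≤ d * (ε * N) := mul_le_mul_of_nonneg_left h2 (by positivity)
      _ = _ := by ring
  let 𝒜 := Finset.univ.filter fun P : Finset ι => ∃ z, P = Finset.univ.filter fun i => 0 < p i z
  let q := ⌊ε * (N : ℝ)⌋₊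
  have hq : (q : ℝ) ≤ 1 * ε * N := by
    rw [one_mul]; exact Nat.floor_le (by positivity)
  let 𝒟 := Finset.univ.filter fun D : Finset ι => D.card ≤ q
  let Bad : Finset (Finset ι) := (𝒜 ×ˢ 𝒟).image fun x => symmDiff x.1 x.2
  have hBad : (Bad.card : ℝ) ≤
      (2 : ℝ) ^ ((N : ℝ) * ((C * d + 2) + (1 + 2)) * ε * Real.logb 2 (1 / ε)) := by
    have h1 : Bad.card ≤ 𝒜.card * 𝒟.card := by
      rw [← Finset.card_product]; exact Finset.card_image_le
    have h2 := sauer_bd (K := K) (ι := ι) d C hC p hp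
    have h3 := card_small (ι := ι) q
    rw [hcard] at h2 h3
    have h4 := ball_bd N (C * Fintype.card K) ε (C * d) h0 hε (by
      push_cast
      calc (C : ℝ) * Fintype.card K ≤ C * (d * ε * N) :=
            mul_le_mul_of_nonneg_left hk (by positivity)
        _ = _ := by ring)
    have h5 := ball_bd N q ε 1 h0 hε hq
    have h6 : (𝒜.card : ℝ) ≤ _ := (Nat.cast_le.2 h2).trans h4
    have h7 : (𝒟.card : ℝ) ≤ _ := (Nat.cast_le.2 h3).trans h5
    calc (Bad.card : ℝ) ≤ (𝒜.card : ℝ) * 𝒟.card := by exact_mod_cast h1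
      _ ≤ _ := mul_le_mul h6 h7 (by positivity) (by positivity)
      _ = _ := by
        rw [← Real.rpow_add (by norm_num)]
        congr 1; ring
  let toS : Finset ι → ι → ℝ := fun A I => if I ∈ A then 1 else -1
  have hinj : Function.Injective toS := by
    intro A B hAB
    ext I
    have := congrFun hAB I
    simp only [toS] at this
    by_cases hA : I ∈ A <;> by_cases hB : I ∈ B <;> simp [hA, hB] at this ⊢ <;> norm_num at this
  refine ⟨toS '' ((Badᶜ : Finset (Finset ι)) : Set (Finset ι)), ?_, ?_, ?_⟩
  · rintro _ ⟨A, -, rfl⟩ I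
    by_cases h : I ∈ A <;> simp [toS, h]
  · have h1 : Nat.card (toS '' ((Badᶜ : Finset (Finset ι)) : Set (Finset ι))) = Badᶜ.card := by
      rw [Nat.card_image_of_injective hinj, Nat.card_coe_set_eq, Set.ncard_coe_finset]
    rw [h1]
    have h2 : (Badᶜ.card : ℝ) + Bad.card = 2 ^ N := by
      have := Finset.card_compl_add_card Bad
      rw [Fintype.card_finset, hcard] at this
      exact_mod_cast this
    linarith
  · intro T hT hS T' hT'
    obtain ⟨m, hm, hrank⟩ := hT'
    obtain ⟨A, hA, hAS⟩ := hS
    by_contra hcon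
    push Not at hcon
    have hAT : ∀ I, I ∈ A ↔ 0 < T I := by
      intro I
      have := congrFun hAS I
      simp only [toS] at this
      rcases lt_or_gt_of_ne (hT I) with h | h
      · rw [Real.sign_of_neg h] at this
        by_cases hI : I ∈ A
        · simp [hI] at this; norm_num at this
        · simp [hI, h.le]
      · rw [Real.sign_of_pos h] at this
        by_cases hI : I ∈ A
        · simp [hI, h]
        · simp [hI] at this; norm_num at this
    have hmm : m ≤ m0 := Nat.le_floor hm
    have hd : 0 < d ∨ m0 = 0 := by
      rcases Nat.eq_zero_or_pos d with h | h
      · right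
        subst h
        simp [m0, hmx]
      · exact Or.inl h
    obtain ⟨u, hu⟩ := tensorRankLE_mono T' m m0 hd hmm hrank
    let z : K → ℝ := fun k => u k.1 k.2.1 k.2.2
    have hpz : ∀ I, p I z = T' I := fun I => (hu I).symm
    let P : Finset ι := Finset.univ.filter fun i => 0 < p i z
    let E : Finset ι := Finset.univ.filter fun I => |T I| ≤ |T I - T' I|
    set μ := ⨅ I, |T I| with hμ
    have hμ0 : 0 ≤ μ := Real.iInf_nonneg fun I => abs_nonneg _
    have hμle : ∀ I, μ ≤ |T I| := fun I => ciInf_le ⟨0, by rintro _ ⟨I, rfl⟩; exact abs_nonneg _⟩ I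
    have hE : (E.card : ℝ) * μ ≤ ∑ I, |T I - T' I| := by
      calc (E.card : ℝ) * μ = ∑ I ∈ E, μ := by simp
        _ ≤ ∑ I ∈ E, |T I - T' I| := Finset.sum_le_sum fun I hI =>
            (hμle I).trans (Finset.mem_filter.1 hI).2
        _ ≤ _ := Finset.sum_le_sum_of_subset_of_nonneg (Finset.subset_univ _)
            fun _ _ _ => abs_nonneg _
    have hEq : E.card ≤ q := by
      apply Nat.le_floor
      exact (lt_of_mul_lt_mul_right (hE.trans_lt hcon) hμ0).le
    have hsub : symmDiff P A ⊆ E := by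
      intro I hI
      by_contra hIE
      have hlt : |T I - T' I| < |T I| := by simpa [E] using hIE
      have : I ∈ P ↔ I ∈ A := by
        rw [hAT]
        simp only [P, Finset.mem_filter, Finset.mem_univ, true_and, hpz]
        rcases lt_or_gt_of_ne (hT I) with h | h
        · rw [abs_of_neg h, abs_lt] at hlt
          constructor <;> intro <;> linarith
        · rw [abs_of_pos h, abs_lt] at hlt
          constructor <;> intro <;> linarith
      rw [Finset.mem_symmDiff] at hI
      tauto
    have hAB : A ∈ Bad := by
      refine Finset.mem_image.2 ⟨(P, symmDiff P A), ?_, ?_⟩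
      · refine Finset.mem_product.2 ⟨?_, ?_⟩
        · simp only [𝒜, Finset.mem_filter, Finset.mem_univ, true_and]
          exact ⟨z, rfl⟩
        · simp only [𝒟, Finset.mem_filter, Finset.mem_univ, true_and]
          exact (Finset.card_le_card hsub).trans hEq
      · simp
    simp [hAB] at hA
end

section
/- Let T ∈ ℝ^{n_1×⋯×n_d} be a tensor and m ∈ ℕ. Then inf_{rank(T̃) ≤ m} ∑_I |T_I − T̃_I| ≥ (inf_{S : rank_±(S) ≤ m+1} #{I : sign(T_I) ≠ S_I}) · min_I |T_I|, where the first infimum is over tensors T̃ ∈ ℝ^{n_1×⋯×n_d} of rank at most m and the second is over signum tensors S ∈ {−1,1}^{n_1×⋯×n_d} of signum rank at most m+1. -/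
/-- The signum rank of a signum tensor `S` is at most `m` if there is a tensor `T` of
rank at most `m`, all of whose entries are nonzero and satisfy `sign(T_I) = S_I`. -/
def signumRankLE {d : ℕ} {n : Fin d → ℕ} (S : ((i : Fin d) → Fin (n i)) → ℝ) (m : ℕ) :
    Prop :=
  ∃ T : ((i : Fin d) → Fin (n i)) → ℝ,
    tensorRankLE T m ∧ ∀ I, T I ≠ 0 ∧ Real.sign (T I) = S I

theorem exists_shift {d m : ℕ} {n : Fin d → ℕ} (T' : ((i : Fin d) → Fin (n i)) → ℝ)
    (h : tensorRankLE T' m) :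
    ∃ ε : ℝ, 0 < ε ∧ (∀ I, T' I < 0 → T' I + ε < 0) ∧
      tensorRankLE (fun I => T' I + ε) (m + 1) := by
  obtain ⟨u, hu⟩ := h
  rcases Nat.eq_zero_or_pos d with hd | hd
  · subst hd
    refine ⟨1, one_pos, ?_, ?_⟩
    · intro I hI
      rw [hu I] at hI
      simp at hI
      have : (0 : ℝ) ≤ m := Nat.cast_nonneg m
      linarith
    · refine ⟨fun _ i => i.elim0, ?_⟩
      intro I
      simp [hu I]
  · have hev : ∀ᶠ ε : ℝ in nhdsWithin 0 (Set.Ioi 0), ∀ I, T' I < 0 → T' I + ε < 0 := by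
      rw [Filter.eventually_all]
      intro I
      by_cases hI : T' I < 0
      · have : Set.Iio (-T' I) ∈ nhds (0 : ℝ) := Iio_mem_nhds (by linarith)
        filter_upwards [mem_nhdsWithin_of_mem_nhds this] with ε hε _
        have : ε < -T' I := hε
        linarith
      · exact Filter.Eventually.of_forall fun ε h => absurd h hI
    obtain ⟨ε, hε, hpos⟩ := (hev.and self_mem_nhdsWithin).exists
    refine ⟨ε, hpos, hε, ?_⟩
    refine ⟨Fin.snoc (α := fun _ => (i : Fin d) → Fin (n i) → ℝ) u
      (fun i _ => if i = ⟨0, hd⟩ then ε else 1), ?_⟩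
    intro I
    rw [Fin.sum_univ_castSucc]
    simp [hu I]

/-- The `ℓ_1`-distance from a tensor `T` to tensors of rank at most `m` is at least the
minimal Hamming distance from `sign T` to signum tensors of signum rank at most `m+1`,
multiplied by `min_I |T_I|`. -/
theorem l1_tensor_approx_ge_sign_distance (d m : ℕ) (n : Fin d → ℕ)
    (T : ((i : Fin d) → Fin (n i)) → ℝ) :
    ((sInf {c : ℕ | ∃ S : ((i : Fin d) → Fin (n i)) → ℝ, IsSignTensor S ∧
        signumRankLE S (m + 1) ∧
        c = Nat.card {I : (i : Fin d) → Fin (n i) // Real.sign (T I) ≠ S I}} : ℕ) : ℝ) *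
      (⨅ I, |T I|) ≤
    sInf {r : ℝ | ∃ T' : ((i : Fin d) → Fin (n i)) → ℝ, tensorRankLE T' m ∧
      r = ∑ I, |T I - T' I|} := by
  have hnonneg : 0 ≤ sInf {r : ℝ | ∃ T' : ((i : Fin d) → Fin (n i)) → ℝ, tensorRankLE T' m ∧
      r = ∑ I, |T I - T' I|} := by
    apply Real.sInf_nonneg
    rintro r ⟨T', -, rfl⟩
    exact Finset.sum_nonneg fun _ _ => abs_nonneg _
  have hbdd : BddBelow (Set.range fun I => |T I|) := ⟨0, by rintro _ ⟨I, rfl⟩; exact abs_nonneg _⟩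
  have hc0 : 0 ≤ ⨅ I, |T I| := Real.iInf_nonneg fun _ => abs_nonneg _
  rcases hc0.eq_or_lt with h0 | hcpos
  · rw [← h0, mul_zero]; exact hnonneg
  have hle : ∀ I, (⨅ I, |T I|) ≤ |T I| := fun I => ciInf_le hbdd I
  generalize (⨅ I, |T I|) = c at *
  apply le_csInf
  · exact ⟨_, fun I => ∑ s : Fin m, ∏ i : Fin d, (1 : ℝ), ⟨fun _ _ _ => 1, fun I => rfl⟩, rfl⟩
  rintro r ⟨T', hT', rfl⟩
  obtain ⟨ε, hε, hneg, hrank⟩ := exists_shift T' hT'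
  have hne : ∀ I, T' I + ε ≠ 0 := by
    intro I h
    have := hneg I (by linarith)
    linarith
  have hmem : Nat.card {I : (i : Fin d) → Fin (n i) // Real.sign (T I) ≠ Real.sign (T' I + ε)} ∈
      {c : ℕ | ∃ S : ((i : Fin d) → Fin (n i)) → ℝ, IsSignTensor S ∧
        signumRankLE S (m + 1) ∧
        c = Nat.card {I : (i : Fin d) → Fin (n i) // Real.sign (T I) ≠ S I}} :=
    ⟨fun I => Real.sign (T' I + ε), fun I => (Real.sign_apply_eq_of_ne_zero _ (hne I)).symm,
      ⟨fun I => T' I + ε, hrank, fun I => ⟨hne I, rfl⟩⟩, rfl⟩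
  refine (mul_le_mul_of_nonneg_right (Nat.cast_le.2 (Nat.sInf_le hmem)) hc0).trans ?_
  classical
  rw [Nat.card_eq_fintype_card, Fintype.card_subtype, ← nsmul_eq_mul]
  refine (Finset.card_nsmul_le_sum _ (fun I => |T I - T' I|) c ?_).trans
    (Finset.sum_le_sum_of_subset_of_nonneg (Finset.filter_subset _ _) fun _ _ _ => abs_nonneg _)
  intro I hI
  have hI' : Real.sign (T I) ≠ Real.sign (T' I + ε) := by simpa using hI
  refine (hle I).trans ?_
  have hT0 : T I ≠ 0 := abs_pos.1 (hcpos.trans_le (hle I))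
  rcases lt_or_gt_of_ne hT0 with ht | ht
  · rcases lt_or_ge (T' I) 0 with h | h
    · exact absurd (by rw [Real.sign_of_neg ht, Real.sign_of_neg (hneg I h)]) hI'
    · rw [abs_of_neg ht, abs_of_neg (by linarith)]; linarith
  · rcases lt_or_ge (T' I) 0 with h | h
    · rw [abs_of_pos ht, abs_of_pos (by linarith)]; linarith
    · exact absurd (by rw [Real.sign_of_pos ht, Real.sign_of_pos (by linarith)]) hI'
end

section
/- For every d ∈ ℕ there is a constant c(d) > 0 with the following property. Let (X_i, μ_i), i = 1,…,d, be measure spaces, X = X_1×⋯×X_d with the product measure μ, and let F ⊆ L_1(X, μ). Suppose F γ-shatters an (n_1×⋯×n_d)-product family A of pairwise disjoint measurable sets, and set N = n_1⋯n_d. Then for every m ≤ c(d) N / max_j{n_j} one has Θ_m(F, L_1(X,μ)) ≥ c(d) γ N. -/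
open MeasureTheory

namespace ThetaAux

open MvPolynomial in
theorem card_crit {κ : Type} [Fintype κ] [DecidableEq κ] (L : ℕ) (hL : 0 < L)
    (q : κ → MvPolynomial κ ℝ) (hq : ∀ j, (q j).totalDegree < L)
    (Z : Finset (κ → ℝ)) (hZ : ∀ z ∈ Z, ∀ j, z j ^ L = eval z (q j)) :
    Z.card ≤ L ^ Fintype.card κ := by
  classical
  let ev : MvPolynomial κ ℝ →ₗ[ℝ] (Z → ℝ) :=
    LinearMap.pi fun z => (aeval (z : κ → ℝ)).toLinearMap
  have hev : ∀ p z, ev p z = eval (z : κ → ℝ) p := by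
    intro p z
    simp [ev, aeval_eq_eval]
  let g : (κ → Fin L) → (Z → ℝ) := fun a => ev (∏ j, X j ^ (a j : ℕ))
  let V := Submodule.span ℝ (Set.range g)
  have key : ∀ n : ℕ, ∀ p : MvPolynomial κ ℝ, p.totalDegree ≤ n → ev p ∈ V := by
    intro n
    induction n using Nat.strong_induction_on with
    | _ n ih =>
      intro p hp
      rw [p.as_sum, map_sum]
      refine Submodule.sum_mem _ fun α hα => ?_
      have hαn : (α.sum fun _ e => e) ≤ n := (le_totalDegree hα).trans hp
      have hdeg : α.degree ≤ n := hαn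
      have e1 : monomial α (coeff α p) = (coeff α p) • monomial α (1:ℝ) := by
        rw [smul_monomial]; simp
      rw [e1, map_smul]
      refine Submodule.smul_mem _ _ ?_
      by_cases h : ∀ j, α j < L
      · refine Submodule.subset_span ⟨fun j => ⟨α j, h j⟩, ?_⟩
        simp only [g]
        congr 1
        rw [monomial_eq, Finsupp.prod_fintype _ _ (by simp)]
        simp
      · push Not at h
        obtain ⟨j, hj⟩ := h
        let β := α - Finsupp.single j L
        have hβ : β + Finsupp.single j L = α := by
          ext i
          by_cases hi : i = j
          · subst hi; simp [β]; omega
          · simp [β, Finsupp.single_apply, Ne.symm hi]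
        have hdβ : β.degree + L = α.degree := by
          rw [← hβ, map_add]; simp
        have e2 : ev (monomial α (1:ℝ)) = ev (monomial β 1 * q j) := by
          ext z
          rw [hev, hev, ← hβ, ← mul_one (1:ℝ), ← monomial_mul, map_mul, map_mul,
            ← hZ z z.2 j]
          simp [eval_monomial]
        rw [e2]
        have hlt : (monomial β (1:ℝ) * q j).totalDegree < n := by
          refine (totalDegree_mul _ _).trans_lt ?_
          have h1 : (monomial β (1:ℝ)).totalDegree ≤ β.degree :=
            totalDegree_monomial_le β (1:ℝ)
          have := hq j
          omega
        exact ih _ hlt _ le_rfl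
  have htop : V = ⊤ := by
    rw [eq_top_iff]
    intro f _
    have hsep : ∀ z w : Z, ∃ r : MvPolynomial κ ℝ,
        z ≠ w → eval (z : κ → ℝ) r = 1 ∧ eval (w : κ → ℝ) r = 0 := by
      intro z w
      by_cases h : z = w
      · exact ⟨0, fun h' => absurd h h'⟩
      · have : ∃ j, (z : κ → ℝ) j ≠ (w : κ → ℝ) j := by
          by_contra! hc
          exact h (Subtype.ext (funext hc))
        obtain ⟨j, hj⟩ := this
        refine ⟨C (((z : κ → ℝ) j - (w : κ → ℝ) j)⁻¹) * (X j - C ((w : κ → ℝ) j)), fun _ => ?_⟩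
        simp [inv_mul_cancel₀ (sub_ne_zero.2 hj)]
    choose r hr using hsep
    have hf : f = ∑ z : Z, f z • ev (∏ w ∈ Finset.univ.erase z, r z w) := by
      ext y
      rw [Finset.sum_apply, Finset.sum_eq_single y]
      · rw [Pi.smul_apply, hev, map_prod, Finset.prod_eq_one]
        · simp
        · intro w hw
          exact (hr y w (Finset.ne_of_mem_erase hw).symm).1
      · intro z _ hzy
        rw [Pi.smul_apply, hev, map_prod, Finset.prod_eq_zero (i := y)]
        · simp
        · simp [Ne.symm hzy]
        · exact (hr z y hzy).2
      · simp
    rw [hf]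
    exact Submodule.sum_mem _ fun z _ => Submodule.smul_mem _ _ (key _ _ le_rfl)
  have h1 : Module.finrank ℝ V ≤ Fintype.card (κ → Fin L) := finrank_range_le_card g
  rw [htop, finrank_top] at h1
  simpa using h1

open MvPolynomial in
theorem totalDegree_pderiv_le' {κ : Type} (j : κ) (p : MvPolynomial κ ℝ) :
    (pderiv j p).totalDegree ≤ p.totalDegree := by
  classical
  nth_rw 1 [p.as_sum]
  rw [map_sum]
  refine totalDegree_finsetSum_le fun α hα => ?_
  rw [pderiv_monomial]
  refine (totalDegree_monomial_le _ _).trans ?_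
  refine le_trans ?_ (le_totalDegree hα)
  change (α - Finsupp.single j 1).degree ≤ α.degree
  exact Finsupp.degree_mono tsub_le_self

open MvPolynomial in
theorem hasDerivAt_eval {κ : Type} [DecidableEq κ] (j : κ) (z : κ → ℝ) (p : MvPolynomial κ ℝ) :
    HasDerivAt (fun t => eval (Function.update z j t) p) (eval z (pderiv j p)) (z j) := by
  induction p using MvPolynomial.induction_on with
  | C a => simpa using hasDerivAt_const (z j) a
  | add p q hp hq => simpa [Pi.add_def] using hp.add hq
  | mul_X p i hp =>
    have hX : HasDerivAt (fun t => eval (Function.update z j t) (X i : MvPolynomial κ ℝ))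
        (eval z (pderiv j (X i))) (z j) := by
      by_cases h : i = j
      · subst h; simpa using hasDerivAt_id' (z i)
      · simpa [h, pderiv_X_of_ne h] using hasDerivAt_const (z j) (z i)
    have := hp.mul hX
    simp only [pderiv_mul, map_add, map_mul]
    simpa [Pi.mul_def] using this

open MvPolynomial in
theorem contDiff_eval {κ : Type} [Fintype κ] (p : MvPolynomial κ ℝ) :
    ContDiff ℝ 1 (fun x : κ → ℝ => eval x p) := by
  induction p using MvPolynomial.induction_on with
  | C a => simpa using contDiff_const
  | add p q hp hq => simpa using hp.add hq
  | mul_X p i hp => simpa using hp.mul (contDiff_apply ℝ ℝ i)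

def sg {ι : Type} [DecidableEq ι] (R : Finset ι) (i : ι) : ℝ := if i ∈ R then -1 else 1

theorem sg_ne {ι : Type} [DecidableEq ι] (R : Finset ι) (i : ι) : sg R i * sg R i = 1 := by
  unfold sg; split_ifs <;> norm_num

open MvPolynomial in
theorem exists_generic {κ ι : Type} [Fintype κ] [DecidableEq κ] [Fintype ι] [DecidableEq ι]
    (p : ι → MvPolynomial κ ℝ) (ε : ℝ) (hε : 0 < ε) :
    ∃ c : ι → ℝ, (∀ i, 0 < c i ∧ c i < ε) ∧ ∀ (R S : Finset ι) (x : κ → ℝ),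
      (∀ i ∈ S, sg R i * eval x (p i) = c i) → S.card ≤ Fintype.card κ := by
  classical
  let Ψ : (RS : Finset ι × Finset ι) → ((κ → ℝ) × ({i // i ∉ RS.2} → ℝ)) → (ι → ℝ) :=
    fun RS xy i => if h : i ∈ RS.2 then sg RS.1 i * eval xy.1 (p i) else xy.2 ⟨i, h⟩
  have hΨ : ∀ RS, ContDiff ℝ 1 (Ψ RS) := by
    intro RS
    rw [contDiff_pi]
    intro i
    by_cases h : i ∈ RS.2
    · simp only [Ψ, h, dite_true]
      exact contDiff_const.mul ((contDiff_eval (p i)).comp contDiff_fst)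
    · simp only [Ψ, h, dite_false]
      exact (contDiff_apply ℝ ℝ (⟨i, h⟩ : {i // i ∉ RS.2})).comp contDiff_snd
  let J := {RS : Finset ι × Finset ι // Fintype.card κ < RS.2.card}
  by_cases hJ : Nonempty J
  swap
  · refine ⟨fun _ => ε / 2, fun _ => ⟨by linarith, by linarith⟩, fun R S x _ => ?_⟩
    by_contra! hc
    exact hJ ⟨⟨(R, S), hc⟩⟩
  have hdim : dimH (⋃ RS : J, Set.range (Ψ RS)) < Module.finrank ℝ (ι → ℝ) := by
    rw [dimH_iUnion]
    · rw [← Finset.sup_univ_eq_iSup]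
      rw [Finset.sup_lt_iff]
      · intro RS _
        refine (hΨ RS).dimH_range_le.trans_lt ?_
        norm_cast
        rw [Module.finrank_prod]
        simp only [Module.finrank_fintype_fun_eq_card]
        have h1 : Fintype.card {i // i ∉ RS.1.2} = Fintype.card ι - RS.1.2.card := by
          rw [Fintype.card_subtype_compl]; simp
        have h2 := RS.2
        have h3 := Finset.card_le_univ RS.1.2
        rw [h1]; omega
      · obtain ⟨RS⟩ := hJ
        have h2 := RS.2
        have h3 := Finset.card_le_univ RS.1.2
        simp only [Module.finrank_fintype_fun_eq_card, bot_eq_zero', Nat.cast_pos]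
        omega
  have hd := dense_compl_of_dimH_lt_finrank hdim
  have hopen : IsOpen (Set.univ.pi fun _ : ι => Set.Ioo (0:ℝ) ε) :=
    isOpen_set_pi Set.finite_univ fun _ _ => isOpen_Ioo
  obtain ⟨c, hc, hc'⟩ := hd.inter_open_nonempty _ hopen
    ⟨fun _ => ε / 2, fun _ _ => ⟨by linarith, by linarith⟩⟩
  refine ⟨c, fun i => hc i trivial, fun R S x hx => ?_⟩
  by_contra! hcard
  apply hc'
  refine Set.mem_iUnion.2 ⟨⟨(R, S), hcard⟩, (x, fun i => c i), ?_⟩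
  ext i
  by_cases h : i ∈ S
  · simp [Ψ, h, hx i h]
  · simp [Ψ, h]

end ThetaAux

namespace ThetaAux

open MvPolynomial in
noncomputable def qpoly {κ ι : Type} [DecidableEq ι] (p : ι → MvPolynomial κ ℝ) (c : ι → ℝ) (D : ℕ)
    (S T : Finset ι) (K : ℝ) (j : κ) : MvPolynomial κ ℝ :=
  C (-(K / (2 * D + 2))) * ∑ i ∈ S, C 2 * (p i - C (sg T i * c i)) * pderiv j (p i)

open MvPolynomial in
theorem qpoly_deg {κ ι : Type} [DecidableEq ι] (p : ι → MvPolynomial κ ℝ) (c : ι → ℝ)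
    (D : ℕ) (hp : ∀ i, (p i).totalDegree ≤ D)
    (S T : Finset ι) (K : ℝ) (j : κ) : (qpoly p c D S T K j).totalDegree < 2 * D + 1 := by
  unfold qpoly
  refine (totalDegree_mul _ _).trans_lt ?_
  rw [totalDegree_C, zero_add, Nat.lt_succ_iff]
  refine totalDegree_finsetSum_le fun i _ => ?_
  refine (totalDegree_mul _ _).trans ?_
  have h1 := (totalDegree_mul (C 2) (p i - C (sg T i * c i)))
  have h2 := totalDegree_sub_C_le (p i) (sg T i * c i)
  have h3 := totalDegree_pderiv_le' j (p i)
  have h4 := hp i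
  rw [totalDegree_C] at h1
  omega

theorem sg_congr {ι : Type} [DecidableEq ι] (R S : Finset ι) (i : ι) (h : i ∈ S) :
    sg (R ∩ S) i = sg R i := by simp [sg, h]

open MvPolynomial in
theorem exists_crit {κ ι : Type} [Fintype κ] [DecidableEq κ] [Fintype ι] [DecidableEq ι]
    (p : ι → MvPolynomial κ ℝ) (c : ι → ℝ) (hc : ∀ i, 0 < c i) (D : ℕ)
    (R : Finset ι) (x : κ → ℝ) (hx : ∀ i, c i ≤ sg R i * eval x (p i)) :
    ∃ S : Finset ι, (∃ y, ∀ i ∈ S, sg R i * eval y (p i) = c i) ∧ ∃ K0 : ℝ, ∀ K ≥ K0,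
      ∃ z : κ → ℝ, (∀ i, 0 < sg R i * eval z (p i)) ∧
        ∀ j, z j ^ (2 * D + 1) = eval z (qpoly p c D S (R ∩ S) K j) := by
  classical
  -- maximal active set
  let 𝒮 : Finset (Finset ι) := Finset.univ.filter fun S =>
    ∃ y : κ → ℝ, (∀ i, c i ≤ sg R i * eval y (p i)) ∧ ∀ i ∈ S, sg R i * eval y (p i) = c i
  have h𝒮 : 𝒮.Nonempty := ⟨∅, by simpa [𝒮] using ⟨x, hx⟩⟩
  obtain ⟨S, hS, hmax⟩ := 𝒮.exists_max_image Finset.card h𝒮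
  obtain ⟨y, hy, hyS⟩ := (Finset.mem_filter.1 hS).2
  have hmax' : ∀ w : κ → ℝ, (∀ i, c i ≤ sg R i * eval w (p i)) →
      (∀ i ∈ S, sg R i * eval w (p i) = c i) → ∀ j ∉ S, sg R j * eval w (p j) ≠ c j := by
    intro w hw hwS j hj hjc
    have hmem : insert j S ∈ 𝒮 := by
      refine Finset.mem_filter.2 ⟨Finset.mem_univ _, w, hw, ?_⟩
      intro i hi
      rcases Finset.mem_insert.1 hi with rfl | hi
      · exact hjc
      · exact hwS i hi
    have := hmax _ hmem
    rw [Finset.card_insert_of_notMem hj] at this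
    omega
  refine ⟨S, ⟨y, hyS⟩, ?_⟩
  have hcont : ∀ i, Continuous fun w : κ → ℝ => sg R i * eval w (p i) := fun i =>
    continuous_const.mul (continuous_eval (p i))
  let h : (κ → ℝ) → ℝ := fun w => ∑ j, w j ^ (2 * D + 2)
  let Φ : (κ → ℝ) → ℝ := fun w => ∑ i ∈ S, (eval w (p i) - sg R i * c i) ^ 2
  have hhc : Continuous h := by fun_prop
  have hΦc : Continuous Φ :=
    continuous_finsetSum _ fun i _ => ((continuous_eval (p i)).sub continuous_const).pow 2
  have hΦ0 : ∀ w, 0 ≤ Φ w := fun w => Finset.sum_nonneg fun i _ => sq_nonneg _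
  have hΦz : ∀ w, Φ w = 0 ↔ ∀ i ∈ S, sg R i * eval w (p i) = c i := by
    intro w
    rw [Finset.sum_eq_zero_iff_of_nonneg (fun i _ => sq_nonneg _)]
    refine forall₂_congr fun i _ => ?_
    rw [sq_eq_zero_iff]
    have := sg_ne R i
    constructor
    · intro h
      have h' : eval w (p i) = sg R i * c i := by linarith
      rw [h', ← mul_assoc, this, one_mul]
    · intro h
      rw [← h, ← mul_assoc, this, one_mul, sub_self]
  let Ω : Set (κ → ℝ) := {w | ∀ i ∉ S, c i ≤ sg R i * eval w (p i)}
  have hΩ : IsClosed Ω := by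
    simp only [Ω, Set.ofPred_forall]
    exact isClosed_iInter fun i => isClosed_iInter fun _ => isClosed_le continuous_const (hcont i)
  have hev : ∀ (w : κ → ℝ) j, 0 ≤ w j ^ (2 * D + 2) := fun w j =>
    Even.pow_nonneg ⟨D + 1, by ring⟩ _
  let r : ℝ := max 1 (h y)
  have hbox : ∀ w, h w ≤ h y → w ∈ Set.univ.pi fun _ : κ => Set.Icc (-r) r := by
    intro w hw j _
    have h1 : w j ^ (2 * D + 2) ≤ h y :=
      (Finset.single_le_sum (f := fun j => w j ^ (2 * D + 2)) (fun j _ => hev w j)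
        (Finset.mem_univ j)).trans hw
    have h2 : |w j| ≤ r := by
      by_contra! hlt
      have h3 : 1 ≤ |w j| := (le_max_left _ _).trans hlt.le
      have h4 : |w j| ≤ |w j| ^ (2 * D + 2) := le_self_pow₀ h3 (by omega)
      rw [Even.pow_abs ⟨D + 1, by ring⟩] at h4
      have := le_max_right 1 (h y)
      linarith
    exact abs_le.1 h2
  have hboxc : IsCompact (Set.univ.pi fun _ : κ => Set.Icc (-r) r) :=
    isCompact_univ_pi fun _ => isCompact_Icc
  have hyΩ : y ∈ Ω := fun i _ => hy i
  have hyΦ : Φ y = 0 := (hΦz y).2 hyS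
  let Bd : Set (κ → ℝ) := {w | (∃ j, j ∉ S ∧ sg R j * eval w (p j) = c j) ∨
    ∃ i ∈ S, sg R i * eval w (p i) ≤ 0}
  have hBd : IsClosed Bd := by
    have : Bd = (⋃ j : ι, {w | j ∉ S ∧ sg R j * eval w (p j) = c j}) ∪
      ⋃ j : ι, {w | j ∈ S ∧ sg R j * eval w (p j) ≤ 0} := by
      ext w; simp [Bd]
    rw [this]
    refine (isClosed_iUnion_of_finite fun j => ?_).union (isClosed_iUnion_of_finite fun j => ?_)
    · exact isClosed_const.inter (isClosed_eq (hcont j) continuous_const)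
    · exact isClosed_const.inter (isClosed_le (hcont j) continuous_const)
  let B := (Set.univ.pi fun _ : κ => Set.Icc (-r) r) ∩ Ω
  have hB : IsCompact B := hboxc.inter_right hΩ
  have hη : ∃ η > 0, ∀ w ∈ B ∩ Bd, η ≤ Φ w := by
    rcases (B ∩ Bd).eq_empty_or_nonempty with he | hne
    · exact ⟨1, one_pos, by simp [he]⟩
    · obtain ⟨w, hw, hmin⟩ := (hB.inter_right hBd).exists_isMinOn hne hΦc.continuousOn
      refine ⟨Φ w, lt_of_le_of_ne (hΦ0 w) ?_, fun v hv => hmin hv⟩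
      intro h0
      have h1 := (hΦz w).1 h0.symm
      have h2 : ∀ i, c i ≤ sg R i * eval w (p i) := by
        intro i
        by_cases hi : i ∈ S
        · exact (h1 i hi).ge
        · exact hw.1.2 i hi
      rcases hw.2 with ⟨j, hj, hj'⟩ | ⟨i, hi, hi'⟩
      · exact hmax' w h2 h1 j hj hj'
      · have := h1 i hi
        have := hc i
        linarith
  obtain ⟨η, hη0, hη⟩ := hη
  refine ⟨(h y + 1) / η, fun K hK => ?_⟩
  have hh0 : ∀ w, 0 ≤ h w := fun w => Finset.sum_nonneg fun j _ => hev w j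
  have hK0 : 0 ≤ K := (div_nonneg (by linarith [hh0 y]) hη0.le).trans hK
  have hKη : h y + 1 ≤ K * η := (div_le_iff₀ hη0).1 hK
  let H : (κ → ℝ) → ℝ := fun w => h w + K * Φ w
  have hHc : Continuous H := hhc.add (continuous_const.mul hΦc)
  have hHy : H y = h y := by simp [H, hyΦ]
  have hyB : y ∈ B := ⟨hbox y le_rfl, hyΩ⟩
  obtain ⟨z, hzB, hzmin⟩ := hB.exists_isMinOn ⟨y, hyB⟩ hHc.continuousOn
  have hzy : H z ≤ h y := hHy ▸ hzmin hyB
  have hznot : z ∉ Bd := by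
    intro hz
    have h1 := hη z ⟨hzB, hz⟩
    have h2 : K * η ≤ K * Φ z := mul_le_mul_of_nonneg_left h1 hK0
    have h3 := hh0 z
    have : H z = h z + K * Φ z := rfl
    linarith
  have hzΩ : ∀ i ∉ S, c i < sg R i * eval z (p i) := by
    intro i hi
    refine lt_of_le_of_ne (hzB.2 i hi) fun he => hznot (Or.inl ⟨i, hi, he.symm⟩)
  have hminΩ : ∀ w ∈ Ω, H z ≤ H w := by
    intro w hw
    by_cases hwy : h w ≤ h y
    · exact hzmin ⟨hbox w hwy, hw⟩
    · have : H w = h w + K * Φ w := rfl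
      have := mul_nonneg hK0 (hΦ0 w)
      push Not at hwy
      linarith
  have hnhds : Ω ∈ nhds z := by
    have : {w : κ → ℝ | ∀ i ∉ S, c i < sg R i * eval w (p i)} ∈ nhds z := by
      refine IsOpen.mem_nhds ?_ hzΩ
      simp only [Set.ofPred_forall]
      exact isOpen_iInter_of_finite fun i => isOpen_iInter_of_finite fun _ =>
        isOpen_lt continuous_const (hcont i)
    exact Filter.mem_of_superset this fun w hw i hi => (hw i hi).le
  refine ⟨z, ?_, ?_⟩
  · intro i
    by_cases hi : i ∈ S
    · by_contra! hle
      exact hznot (Or.inr ⟨i, hi, hle⟩)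
    · exact (hc i).trans (hzΩ i hi)
  · intro j
    let P : MvPolynomial κ ℝ := ∑ j, X j ^ (2 * D + 2) +
      C K * ∑ i ∈ S, (p i - C (sg R i * c i)) ^ 2
    have hP : ∀ w, eval w P = H w := by
      intro w; simp [P, H, h, Φ]
    have hd := hasDerivAt_eval j z P
    have hloc : IsLocalMin (fun t => eval (Function.update z j t) P) (z j) := by
      have hct : Filter.Tendsto (fun t => Function.update z j t) (nhds (z j)) (nhds z) := by
        have : Continuous fun t => Function.update z j t := by fun_prop
        simpa using this.tendsto (z j)
      filter_upwards [hct hnhds] with t ht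
      simp only [hP, Function.update_eq_self]
      exact hminΩ _ ht
    have h0 := hloc.hasDerivAt_eq_zero hd
    have h1 : eval z (pderiv j P) = (2 * D + 2) * z j ^ (2 * D + 1) +
        K * ∑ i ∈ S, 2 * (eval z (p i) - sg R i * c i) * eval z (pderiv j (p i)) := by
      simp only [P, map_add, map_sum, pderiv_pow, pderiv_C_mul, map_mul, pderiv_X]
      simp [Pi.single_apply]
    have h2 : eval z (qpoly p c D S (R ∩ S) K j) = -(K / (2 * D + 2)) *
        ∑ i ∈ S, 2 * (eval z (p i) - sg R i * c i) * eval z (pderiv j (p i)) := by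
      simp only [qpoly, map_mul, map_sum, map_sub, eval_C]
      congr 1
      refine Finset.sum_congr rfl fun i hi => ?_
      rw [sg_congr R S i hi]
    rw [h2]
    rw [h1] at h0
    have hD : (2 * (D:ℝ) + 2) ≠ 0 := by positivity
    field_simp
    linarith

def Pairs (ι : Type) [Fintype ι] [DecidableEq ι] (k : ℕ) : Finset (Finset ι × Finset ι) :=
  Finset.univ.filter fun ST => ST.1.card ≤ k ∧ ST.2 ⊆ ST.1

open MvPolynomial in
theorem warren {κ ι : Type} [Fintype κ] [DecidableEq κ] [Fintype ι] [DecidableEq ι]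
    (p : ι → MvPolynomial κ ℝ) (D : ℕ) (hp : ∀ i, (p i).totalDegree ≤ D)
    (𝓡 : Finset (Finset ι)) (h𝓡 : ∀ R ∈ 𝓡, ∃ x, ∀ i, 0 < sg R i * eval x (p i)) :
    𝓡.card ≤ (2 * D + 1) ^ Fintype.card κ * (Pairs ι (Fintype.card κ)).card := by
  classical
  choose! x hx using h𝓡
  obtain ⟨ε, hε, hε'⟩ : ∃ ε > 0, ∀ R ∈ 𝓡, ∀ i, ε ≤ sg R i * eval (x R) (p i) := by
    have : ∀ᶠ ε in nhdsWithin (0:ℝ) (Set.Ioi 0),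
        ∀ R ∈ 𝓡, ∀ i, ε ≤ sg R i * eval (x R) (p i) := by
      rw [Filter.eventually_all_finset]
      intro R hR
      rw [Filter.eventually_all]
      intro i
      exact nhdsWithin_le_nhds (Iic_mem_nhds (hx R hR i))
    obtain ⟨ε, h1, h2⟩ := (this.and self_mem_nhdsWithin).exists
    exact ⟨ε, h2, h1⟩
  obtain ⟨c, hc, hgen⟩ := exists_generic p ε hε
  have hcr := fun R (hR : R ∈ 𝓡) => exists_crit p c (fun i => (hc i).1) D R (x R)
    (fun i => (hc i).2.le.trans (hε' R hR i))
  choose! S hS K0 hK0 using hcr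
  obtain ⟨K, hK⟩ : ∃ K, ∀ R ∈ 𝓡, K0 R ≤ K := by
    obtain ⟨K, hK⟩ := (𝓡.image K0).bddAbove
    exact ⟨K, fun R hR => hK (Finset.mem_image_of_mem _ hR)⟩
  choose! z hz hzc using fun R hR => hK0 R hR K (hK R hR)
  refine Finset.card_le_mul_card_image_of_maps_to (f := fun R => (S R, R ∩ S R)) ?_ _ ?_
  · intro R hR
    obtain ⟨y, hy⟩ := hS R hR
    simpa [Pairs, Finset.inter_subset_right] using hgen R (S R) y hy
  · rintro ⟨S', T⟩ _
    have hinj : Set.InjOn z (↑(𝓡.filter fun R => (S R, R ∩ S R) = (S', T)) : Set (Finset ι)) := by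
      intro R hR R' hR' he
      have h1 := hz R (Finset.mem_filter.1 hR).1
      have h2 := hz R' (Finset.mem_filter.1 hR').1
      rw [← he] at h2
      ext i
      have h1 := h1 i
      have h2 := h2 i
      by_cases a : i ∈ R <;> by_cases b : i ∈ R' <;> simp [sg, a, b] at h1 h2 ⊢ <;> linarith
    rw [← Finset.card_image_of_injOn hinj]
    refine card_crit (2 * D + 1) (by omega) (qpoly p c D S' T K) (qpoly_deg p c D hp S' T K) _ ?_
    intro w hw j
    obtain ⟨R, hR, rfl⟩ := Finset.mem_image.1 hw
    obtain ⟨hR, he⟩ := Finset.mem_filter.1 hR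
    have := hzc R hR j
    rw [Prod.mk.injEq] at he
    rwa [he.2, he.1] at this

theorem card_Pairs (ι : Type) [Fintype ι] [DecidableEq ι] (k : ℕ) :
    ((Pairs ι k).card : ℝ) ≤ 16 ^ k * (9 / 8) ^ Fintype.card ι := by
  have h1 : (Pairs ι k).card = ∑ S ∈ (Finset.univ : Finset (Finset ι)),
      if S.card ≤ k then 2 ^ S.card else 0 := by
    rw [Finset.card_eq_sum_card_fiberwise (f := Prod.fst) (t := Finset.univ) (by simp)]
    refine Finset.sum_congr rfl fun S _ => ?_
    split_ifs with h
    · rw [← Finset.card_powerset, ← Finset.card_map (s := S.powerset) ⟨fun T => (S, T), Prod.mk_right_injective S⟩]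
      refine congrArg Finset.card ?_
      ext ⟨A, B⟩
      simp [Pairs]
      grind
    · rw [Finset.card_eq_zero, Finset.filter_eq_empty_iff]
      rintro ⟨A, B⟩ hAB rfl
      simp [Pairs] at hAB
      exact h hAB.1
  rw [h1]
  push_cast
  have h2 := Fintype.sum_pow_mul_eq_add_pow ι (1/8 : ℝ) 1
  have h3 : (9/8 : ℝ) = 1/8 + 1 := by norm_num
  rw [h3, ← h2, Finset.mul_sum]
  refine Finset.sum_le_sum fun S _ => ?_
  split_ifs with h
  · have : (2:ℝ) ^ S.card = 16 ^ S.card * ((1/8) ^ S.card * 1 ^ (Fintype.card ι - S.card)) := by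
      rw [one_pow, mul_one, ← mul_pow]; norm_num
    push_cast
    rw [this]
    gcongr
    norm_num
  · simp

open MvPolynomial in
theorem exists_good {κ ι : Type} [Fintype κ] [DecidableEq κ] [Fintype ι] [DecidableEq ι]
    [Nonempty ι]
    (p : ι → MvPolynomial κ ℝ) (D : ℕ) (hp : ∀ i, (p i).totalDegree ≤ D) (Q : ℕ)
    (hQ : (256 * (2 * D + 1) : ℝ) ≤ (3 / 2) ^ Q) (hk : Q * Fintype.card κ ≤ Fintype.card ι) :
    ∃ R : Finset ι, ∀ E : Finset ι, Q * E.card ≤ Fintype.card ι →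
      ¬ ∃ x, ∀ i ∉ E, 0 < sg R i * eval x (p i) := by
  classical
  have hQ0 : 0 < Q := by
    rcases Nat.eq_zero_or_pos Q with rfl | h
    · have : (0:ℝ) ≤ D := Nat.cast_nonneg D
      norm_num at hQ; linarith
    · exact h
  by_contra! hcon
  choose E hE hx using hcon
  let e := Fintype.card ι / Q
  have hEe : ∀ R, (E R).card ≤ e := fun R =>
    (Nat.le_div_iff_mul_le hQ0).2 (by rw [mul_comm]; exact hE R)
  have hcount : (Finset.univ : Finset (Finset ι)).card ≤
      ((2 * D + 1) ^ Fintype.card κ * (Pairs ι (Fintype.card κ)).card) * (Pairs ι e).card := by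
    refine Finset.card_le_mul_card_image_of_maps_to (f := fun R => (E R, R ∩ E R)) ?_ _ ?_
    · intro R _
      simpa [Pairs, Finset.inter_subset_right] using hEe R
    · rintro ⟨E', T⟩ _
      refine warren (fun i => if i ∈ E' then C (sg T i) else p i) D ?_ _ ?_
      · intro i
        split_ifs
        · simp
        · exact hp i
      · intro R hR
        obtain ⟨x, hx⟩ := hx R
        have he := (Finset.mem_filter.1 hR).2
        rw [Prod.mk.injEq] at he
        obtain ⟨rfl, rfl⟩ := he
        refine ⟨x, fun i => ?_⟩
        split_ifs with h
        · rw [eval_C, sg_congr R _ i h, sg_ne]; exact one_pos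
        · exact hx i h
  have h1 : ((2:ℝ) ^ Fintype.card ι) ≤
      ((2 * D + 1) ^ Fintype.card κ * (Pairs ι (Fintype.card κ)).card) * (Pairs ι e).card := by
    have := hcount
    rw [Finset.card_univ, Fintype.card_finset] at this
    exact_mod_cast this
  have hQe : Q * e ≤ Fintype.card ι := Nat.mul_div_le _ _
  have hke : Fintype.card κ ≤ e := (Nat.le_div_iff_mul_le hQ0).2 (by rw [mul_comm]; exact hk)
  set N := Fintype.card ι with hN
  set k := Fintype.card κ
  have hNpos : N ≠ 0 := Fintype.card_ne_zero
  have h2 : ((2 * D + 1 : ℝ) ^ k * (Pairs ι k).card) * (Pairs ι e).card ≤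
      ((2 * D + 1) ^ e * (16 ^ e * (9 / 8) ^ N)) * (16 ^ e * (9 / 8) ^ N) := by
    have hA : (1:ℝ) ≤ 2 * D + 1 := by
      have : (0:ℝ) ≤ D := Nat.cast_nonneg D
      linarith
    have h3 : ((Pairs ι k).card : ℝ) ≤ 16 ^ e * (9 / 8) ^ N := by
      refine (card_Pairs ι k).trans ?_
      gcongr
      norm_num
    gcongr
    exact card_Pairs ι e
  have h4 : ((2 * D + 1 : ℝ) ^ e * (16 ^ e * (9 / 8) ^ N)) * (16 ^ e * (9 / 8) ^ N) =
      (256 * (2 * D + 1)) ^ e * (81 / 64) ^ N := by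
    rw [mul_pow, show (256:ℝ) = 16 * 16 by norm_num, show (81/64:ℝ) = (9/8) * (9/8) by norm_num,
      mul_pow, mul_pow]
    ring
  have h5 : ((256:ℝ) * (2 * D + 1)) ^ e ≤ (3 / 2) ^ N := by
    calc ((256:ℝ) * (2 * D + 1)) ^ e ≤ ((3 / 2) ^ Q) ^ e := by gcongr
      _ = (3 / 2) ^ (Q * e) := by rw [pow_mul]
      _ ≤ (3 / 2) ^ N := pow_le_pow_right₀ (by norm_num) hQe
  have h6 : ((256:ℝ) * (2 * D + 1)) ^ e * (81 / 64) ^ N ≤ (243 / 128) ^ N := by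
    calc _ ≤ ((3:ℝ) / 2) ^ N * (81 / 64) ^ N := by gcongr
      _ = _ := by rw [← mul_pow]; norm_num
  have h7 : ((243:ℝ) / 128) ^ N < 2 ^ N := pow_lt_pow_left₀ (by norm_num) (by norm_num) hNpos
  linarith

end ThetaAux

namespace ThetaAux

open MvPolynomial in
noncomputable def tpoly {d : ℕ} (n : Fin d → ℕ) (m : ℕ) (I : (i : Fin d) → Fin (n i)) :
    MvPolynomial (Fin m × (Σ i : Fin d, Fin (n i))) ℝ :=
  ∑ s, ∏ i, X (s, ⟨i, I i⟩)

open MvPolynomial in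
theorem tpoly_deg {d : ℕ} (n : Fin d → ℕ) (m : ℕ) (I : (i : Fin d) → Fin (n i)) :
    (tpoly n m I).totalDegree ≤ d := by
  refine totalDegree_finsetSum_le fun s _ => ?_
  refine (totalDegree_finsetProd _ _).trans ?_
  simp [totalDegree_X]

open MvPolynomial in
theorem tendsto_trunc {d : ℕ} (X : Fin d → Type*) [∀ i, MeasurableSpace (X i)]
    (μ : (i : Fin d) → Measure (X i)) [∀ i, SigmaFinite (μ i)]
    (n : Fin d → ℕ) (A : (i : Fin d) → Fin (n i) → Set (X i))
    (hA : ∀ i j, MeasurableSet (A i j)) (m : ℕ) (u : Fin m → (i : Fin d) → X i → ℝ)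
    (hu : ∀ s i, Measurable (u s i))
    (hg : Integrable (fun x : (i : Fin d) → X i => ∑ s, ∏ i, u s i (x i)) (Measure.pi μ)) :
    ∃ t : ℕ → (Fin m × (Σ i : Fin d, Fin (n i))) → ℝ, ∀ I,
      Filter.Tendsto (fun r => eval (t r) (tpoly n m I)) Filter.atTop
        (nhds (∫ x in Set.univ.pi fun i => A i (I i), ∑ s, ∏ i, u s i (x i) ∂Measure.pi μ)) := by
  let T : ℕ → (i : Fin d) → Set (X i) := fun r i =>
    spanningSets (μ i) r ∩ {x | ∀ s, |u s i x| ≤ r}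
  have hTm : ∀ r i, MeasurableSet (T r i) := by
    intro r i
    refine (measurableSet_spanningSets (μ i) r).inter ?_
    have : {x | ∀ s, |u s i x| ≤ (r:ℝ)} = ⋂ s, {x | |u s i x| ≤ (r:ℝ)} := by ext; simp
    rw [this]
    exact MeasurableSet.iInter fun s => measurableSet_le (hu s i).abs measurable_const
  have hTmono : ∀ i, Monotone fun r => T r i := by
    intro i r r' h x hx
    exact ⟨monotone_spanningSets (μ i) h hx.1, fun s => (hx.2 s).trans (by exact_mod_cast h)⟩
  have hTU : ∀ i x, ∃ r, x ∈ T r i := by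
    intro i x
    have h1 : x ∈ ⋃ r, spanningSets (μ i) r := by rw [iUnion_spanningSets]; trivial
    obtain ⟨r1, hr1⟩ := Set.mem_iUnion.1 h1
    obtain ⟨r2, hr2⟩ := exists_nat_ge (∑ s, |u s i x|)
    refine ⟨max r1 r2, monotone_spanningSets (μ i) (le_max_left _ _) hr1, fun s => ?_⟩
    have h3 : |u s i x| ≤ ∑ s, |u s i x| :=
      Finset.single_le_sum (f := fun s => |u s i x|) (fun s _ => abs_nonneg _) (Finset.mem_univ s)
    have h4 : (r2:ℝ) ≤ (max r1 r2 : ℕ) := by exact_mod_cast le_max_right _ _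
    linarith
  refine ⟨fun r v => ∫ x in A v.2.1 v.2.2 ∩ T r v.2.1, u v.1 v.2.1 x ∂μ v.2.1, fun I => ?_⟩
  have hUn : (⋃ r, Set.univ.pi fun i => A i (I i) ∩ T r i) = Set.univ.pi fun i => A i (I i) := by
    ext x
    simp only [Set.mem_iUnion, Set.mem_univ_pi, Set.mem_inter_iff]
    constructor
    · rintro ⟨r, hr⟩ i
      exact (hr i).1
    · intro h
      choose r hr using fun i => hTU i (x i)
      exact ⟨Finset.univ.sup r, fun i =>
        ⟨h i, hTmono i (Finset.le_sup (Finset.mem_univ i)) (hr i)⟩⟩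
  have hlim := tendsto_setIntegral_of_monotone (μ := Measure.pi μ)
    (s := fun r => Set.univ.pi fun i => A i (I i) ∩ T r i)
    (f := fun x : (i : Fin d) → X i => ∑ s, ∏ i, u s i (x i))
    (fun r => MeasurableSet.univ_pi fun i => (hA i (I i)).inter (hTm r i))
    (fun r r' h => Set.pi_mono fun i _ => Set.inter_subset_inter_right _ (hTmono i h))
    hg.integrableOn
  rw [hUn] at hlim
  refine hlim.congr fun r => ?_
  have hint : ∀ s i, Integrable (u s i) ((μ i).restrict (A i (I i) ∩ T r i)) := by
    intro s i
    have hfin : μ i (A i (I i) ∩ T r i) < ⊤ :=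
      (measure_mono (Set.inter_subset_right.trans Set.inter_subset_left)).trans_lt
        (measure_spanningSets_lt_top (μ i) r)
    refine Measure.integrableOn_of_bounded (M := r) hfin.ne (hu s i).aestronglyMeasurable ?_
    refine (ae_restrict_iff' ((hA i (I i)).inter (hTm r i))).2 (Filter.Eventually.of_forall ?_)
    intro x hx
    exact hx.2.2 s
  rw [Measure.restrict_pi_pi, integral_finsetSum]
  · simp only [tpoly, map_sum, map_prod, eval_X]
    refine Finset.sum_congr rfl fun s _ => ?_
    rw [integral_fintype_prod_eq_prod]
  · intro s _
    exact Integrable.fintype_prod_dep (fun i => hint s i)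

end ThetaAux

open ThetaAux in
/-- If a class `F ⊆ L₁(X, μ)` on a product measure space `γ`-shatters an
`(n₁×⋯×n_d)`-product family of pairwise disjoint measurable sets, then the error of
best `m`-term approximation by tensor products satisfies
`Θ_m(F, L₁) ≥ c(d) γ N` for all `m ≤ c(d) N / max_j n_j`, where `N = n₁⋯n_d`. -/
theorem theta_lower_of_shattering (d : ℕ) :
    ∃ c : ℝ, 0 < c ∧
      ∀ (X : Fin d → Type*) [∀ i, MeasurableSpace (X i)]
        (μ : (i : Fin d) → Measure (X i)) [∀ i, SigmaFinite (μ i)]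
        (n : Fin d → ℕ) (A : (i : Fin d) → Fin (n i) → Set (X i)),
        (∀ i j, MeasurableSet (A i j)) →
        (∀ I J : (i : Fin d) → Fin (n i), I ≠ J →
          Disjoint (Set.univ.pi fun i => A i (I i)) (Set.univ.pi fun i => A i (J i))) →
        ∀ F : Set (((i : Fin d) → X i) → ℝ),
        (∀ f ∈ F, Integrable f (Measure.pi μ)) →
        ∀ γ : ℝ, 0 < γ →
        (∀ σ : ((i : Fin d) → Fin (n i)) → ℝ, (∀ I, σ I = 1 ∨ σ I = -1) →
          ∃ f ∈ F, ∀ I, γ ≤ σ I * ∫ x in Set.univ.pi fun i => A i (I i), f x ∂Measure.pi μ) →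
        ∀ m : ℕ, (m : ℝ) ≤ c * (∏ i, n i : ℕ) / (Finset.univ.sup n : ℕ) →
          ENNReal.ofReal (c * γ * (∏ i, n i : ℕ)) ≤
            ⨆ f ∈ F, ⨅ (u : Fin m → (i : Fin d) → X i → ℝ)
              (_ : (∀ s i, Measurable (u s i)) ∧
                Integrable (fun x : (i : Fin d) → X i => ∑ s, ∏ i, u s i (x i))
                  (Measure.pi μ)),
              ∫⁻ x, ENNReal.ofReal |f x - ∑ s, ∏ i, u s i (x i)| ∂Measure.pi μ := by
  classical
  obtain ⟨Q, hQ⟩ := pow_unbounded_of_one_lt (256 * (2 * d + 1) : ℝ) (y := (3 / 2 : ℝ)) (by norm_num)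
  have hQ0 : 0 < Q := by
    rcases Nat.eq_zero_or_pos Q with rfl | h
    · have : (0:ℝ) ≤ d := Nat.cast_nonneg d
      norm_num at hQ; linarith
    · exact h
  have hQ0' : (0:ℝ) < Q := by exact_mod_cast hQ0
  refine ⟨1 / (Q * (d + 1)), by positivity, ?_⟩
  intro X _ μ _ n A hA hdisj F hF γ hγ hsh m hm
  set c : ℝ := 1 / (Q * (d + 1)) with hc
  have hc0 : 0 < c := by positivity
  have hcQ : c * Q ≤ 1 := by
    rw [hc, one_div, mul_inv, mul_comm, ← mul_assoc, mul_inv_cancel₀ hQ0'.ne', one_mul]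
    exact inv_le_one_of_one_le₀ (by linarith [(Nat.cast_nonneg d : (0:ℝ) ≤ d)])
  have hcard : Fintype.card ((i : Fin d) → Fin (n i)) = ∏ i, n i := by simp
  by_cases hN : (∏ i, n i) = 0
  · simp [hN]
  have hne : Nonempty ((i : Fin d) → Fin (n i)) := by
    rw [← Fintype.card_pos_iff, hcard]; omega
  have hk : Q * Fintype.card (Fin m × (Σ i : Fin d, Fin (n i))) ≤
      Fintype.card ((i : Fin d) → Fin (n i)) := by
    rw [hcard]
    simp only [Fintype.card_prod, Fintype.card_fin, Fintype.card_sigma]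
    set N := ∏ i, n i
    set M := Finset.univ.sup n
    have h1 : ∑ i, n i ≤ d * M := by
      have := Finset.sum_le_card_nsmul Finset.univ n M fun i hi => Finset.le_sup hi
      simpa using this
    have h2 : (m:ℝ) * M ≤ c * N := by
      rcases Nat.eq_zero_or_pos M with h | h
      · rw [h]; simp; positivity
      · exact (le_div_iff₀ (by exact_mod_cast h)).1 hm
    have h3 : (Q * (m * (d * M)) : ℝ) ≤ N := by
      calc (Q * (m * (d * M)) : ℝ) = Q * d * (m * M) := by ring
        _ ≤ Q * d * (c * N) := by gcongr
        _ ≤ Q * (d + 1) * (c * N) := by gcongr; linarith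
        _ = N := by rw [hc]; field_simp
    have h4 : Q * (m * (d * M)) ≤ N := by exact_mod_cast h3
    exact (by gcongr : Q * (m * ∑ i, n i) ≤ Q * (m * (d * M))).trans h4
  obtain ⟨R, hR⟩ := exists_good (tpoly n m) d (tpoly_deg n m) Q hQ.le hk
  obtain ⟨f, hfF, hf⟩ := hsh (sg R) (fun I => by unfold sg; split_ifs <;> simp)
  refine le_iSup₂_of_le f hfF ?_
  refine le_iInf fun u => le_iInf fun hu => ?_
  obtain ⟨t, ht⟩ := tendsto_trunc X μ n A hA m u hu.1 hu.2
  set g : ((i : Fin d) → X i) → ℝ := fun x => ∑ s, ∏ i, u s i (x i) with hgdef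
  let AI : ((i : Fin d) → Fin (n i)) → Set ((i : Fin d) → X i) :=
    fun I => Set.univ.pi fun i => A i (I i)
  let E : Finset ((i : Fin d) → Fin (n i)) :=
    Finset.univ.filter fun I => sg R I * ∫ x in AI I, g x ∂Measure.pi μ ≤ 0
  have hE : (∏ i, n i) < Q * E.card := by
    by_contra! hle
    refine hR E (by rw [hcard]; exact hle) ?_
    have : ∀ᶠ r in Filter.atTop, ∀ I, I ∉ E →
        0 < sg R I * MvPolynomial.eval (t r) (tpoly n m I) := by
      rw [Filter.eventually_all]
      intro I
      by_cases hI : I ∈ E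
      · simp [hI]
      · have hpos : 0 < sg R I * ∫ x in AI I, g x ∂Measure.pi μ := by
          simpa [E] using hI
        filter_upwards [((ht I).const_mul (sg R I)).eventually (lt_mem_nhds hpos)] with r hr _
        exact hr
    obtain ⟨r, hr⟩ := this.exists
    exact ⟨t r, hr⟩
  have hAm : ∀ I, MeasurableSet (AI I) := fun I => MeasurableSet.univ_pi fun i => hA i (I i)
  have hfg : Integrable (fun x => f x - g x) (Measure.pi μ) := (hF f hfF).sub hu.2
  have hlow : ∀ I ∈ E, ENNReal.ofReal γ ≤
      ∫⁻ x in AI I, ENNReal.ofReal |f x - g x| ∂Measure.pi μ := by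
    intro I hI
    rw [← ofReal_integral_eq_lintegral_ofReal hfg.abs.integrableOn
      (Filter.Eventually.of_forall fun x => abs_nonneg _)]
    refine ENNReal.ofReal_le_ofReal ?_
    have h1 := hf I
    have h2 : sg R I * ∫ x in AI I, g x ∂Measure.pi μ ≤ 0 := (Finset.mem_filter.1 hI).2
    have h3 : ∫ x in AI I, (f x - g x) ∂Measure.pi μ =
        (∫ x in AI I, f x ∂Measure.pi μ) - ∫ x in AI I, g x ∂Measure.pi μ :=
      integral_sub (hF f hfF).integrableOn hu.2.integrableOn
    have h4 : γ ≤ sg R I * ∫ x in AI I, (f x - g x) ∂Measure.pi μ := by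
      rw [h3, mul_sub]; linarith
    have h5 : |sg R I| = 1 := by unfold sg; split_ifs <;> simp
    calc γ ≤ |sg R I * ∫ x in AI I, (f x - g x) ∂Measure.pi μ| := h4.trans (le_abs_self _)
      _ = |∫ x in AI I, (f x - g x) ∂Measure.pi μ| := by rw [abs_mul, h5, one_mul]
      _ ≤ ∫ x in AI I, |f x - g x| ∂Measure.pi μ := abs_integral_le_integral_abs
  calc ENNReal.ofReal (c * γ * (∏ i, n i : ℕ)) ≤ ENNReal.ofReal (E.card * γ) := by
        refine ENNReal.ofReal_le_ofReal ?_
        have h1 : ((∏ i, n i : ℕ) : ℝ) ≤ Q * E.card := by exact_mod_cast hE.le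
        calc c * γ * (∏ i, n i : ℕ) ≤ c * γ * (Q * E.card) := by gcongr
          _ = (c * Q) * (E.card * γ) := by ring
          _ ≤ 1 * (E.card * γ) := by gcongr
          _ = _ := one_mul _
    _ = ∑ I ∈ E, ENNReal.ofReal γ := by
        rw [Finset.sum_const, nsmul_eq_mul, ENNReal.ofReal_mul (by positivity)]; simp
    _ ≤ ∑ I ∈ E, ∫⁻ x in AI I, ENNReal.ofReal |f x - g x| ∂Measure.pi μ := Finset.sum_le_sum hlow
    _ = ∫⁻ x in ⋃ I ∈ E, AI I, ENNReal.ofReal |f x - g x| ∂Measure.pi μ := by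
        rw [lintegral_biUnion_finset]
        · intro I _ J _ hIJ
          exact hdisj I J hIJ
        · intro I _
          exact hAm I
    _ ≤ ∫⁻ x, ENNReal.ofReal |f x - g x| ∂Measure.pi μ := setLIntegral_le_lintegral _ _
end

section
/- Let d ≥ 2 and r ≥ 1 be integers. There is a constant c(r,d) > 0 such that for every m ≥ 1, Θ_m(U(C^r[0,1]^d), L_1[0,1]^d) ≥ c(r,d) m^{−r/(d−1)}. -/
open MeasureTheory

/-- The closed unit cube `[0,1]^d`. -/
def unitCube (d : ℕ) : Set (Fin d → ℝ) := Set.univ.pi fun _ => Set.Icc 0 1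

/-- Partial derivative (within the unit cube) in direction `i`. -/
noncomputable def pdermW (d : ℕ) (i : Fin d) (f : (Fin d → ℝ) → ℝ) :
    (Fin d → ℝ) → ℝ :=
  fun x => fderivWithin ℝ f (unitCube d) x (Pi.single i 1)

/-- Iterated partial derivative (within the unit cube) along a list of coordinates. -/
noncomputable def iterPDW (d : ℕ) : List (Fin d) → ((Fin d → ℝ) → ℝ) → (Fin d → ℝ) → ℝ
  | [], f => f
  | i :: L, f => pdermW d i (iterPDW d L f)

/-- The unit ball `U(C^r[0,1]^d)`: functions with all partial derivatives of total order
at most `r` existing, continuous, and bounded by `1` on the cube. -/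
def UCr (d r : ℕ) : Set ((Fin d → ℝ) → ℝ) :=
  {f | ContDiffOn ℝ r f (unitCube d) ∧
    ∀ L : List (Fin d), L.length ≤ r → ∀ x ∈ unitCube d, |iterPDW d L f x| ≤ 1}

/-- The error of best `m`-term approximation of `f` by sums of tensor products, in
`L₁(μ)`. -/
noncomputable def theta1 (d m : ℕ) (μ : Measure (Fin d → ℝ)) (f : (Fin d → ℝ) → ℝ) :
    ℝ :=
  sInf {r : ℝ | ∃ u : Fin m → Fin d → ℝ → ℝ,
    (∀ s i, Measurable (u s i)) ∧
    Integrable (fun x : Fin d → ℝ => ∑ s, ∏ i, u s i (x i)) μ ∧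
    r = ∫ x, |f x - ∑ s, ∏ i, u s i (x i)| ∂μ}


noncomputable def sg (b : Bool) : ℝ := if b then 1 else -1

lemma sg_sq (b : Bool) : sg b * sg b = 1 := by cases b <;> simp [sg]
lemma sg_abs (b : Bool) : |sg b| = 1 := by cases b <;> simp [sg]

noncomputable def chi {J : Type} (S : Finset J) (σ : J → Bool) : ℝ := ∏ j ∈ S, sg (σ j)

lemma chi_orth {J : Type} [Fintype J] [DecidableEq J] {S S' : Finset J} (h : S ≠ S') :
    ∑ σ : J → Bool, chi S σ * chi S' σ = 0 := by
  have h1 : ∀ σ : J → Bool, chi S σ * chi S' σ =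
      ∏ j, ((if j ∈ S then sg (σ j) else 1) * (if j ∈ S' then sg (σ j) else 1)) := by
    intro σ
    rw [Finset.prod_mul_distrib, Finset.prod_ite_mem, Finset.prod_ite_mem]
    simp [chi]
  simp_rw [h1]
  have h2 := (Finset.prod_univ_sum (fun _ : J => (Finset.univ : Finset Bool))
    (fun j b => (if j ∈ S then sg b else 1) * (if j ∈ S' then sg b else 1)))
  rw [Fintype.piFinset_univ] at h2
  rw [← h2]
  have : ∃ j, ¬ (j ∈ S ↔ j ∈ S') := by
    by_contra hc
    push Not at hc
    exact h (Finset.ext hc)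
  obtain ⟨j, hj⟩ := this
  apply Finset.prod_eq_zero (Finset.mem_univ j)
  by_cases a : j ∈ S <;> by_cases b : j ∈ S' <;> simp_all [sg]

lemma chi_sq {J : Type} (S : Finset J) (σ : J → Bool) : chi S σ * chi S σ = 1 := by
  unfold chi
  rw [← Finset.prod_mul_distrib]
  exact Finset.prod_eq_one (fun j _ => sg_sq _)

lemma core1 {J ι : Type} [Fintype J] [DecidableEq J] [Fintype ι] (t : ℕ)
    (F : Finset (J → Bool)) (A : Finset (Finset J))
    (G : ι → EuclideanSpace ℝ (J → Bool))
    (g : Finset J → EuclideanSpace ℝ (J → Bool))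
    (hg : ∀ S ∈ A, g S ∈ Submodule.span ℝ (Set.range G))
    (hF : ∀ S ∈ A, ∀ σ ∉ F, g S σ = 0) (a : ℝ) (ha : 0 < a)
    (h1 : ∀ S ∈ A, ∀ σ ∈ F, (a/2)^t ≤ chi S σ * g S σ)
    (h2 : ∀ S ∈ A, ∀ σ ∈ F, chi S σ * g S σ ≤ (3*a/2)^t) :
    A.card * F.card ≤ 9^t * Fintype.card ι * 2^(Fintype.card J) := by
  set V := Submodule.span ℝ (Set.range G) with hV
  set N := Fintype.card J
  have hfr : Module.finrank ℝ V ≤ Fintype.card ι := finrank_range_le_card G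
  let e := stdOrthonormalBasis ℝ V
  let X : Finset J → EuclideanSpace ℝ (J → Bool) := fun S => WithLp.toLp 2 (chi S)
  have hXX : ∀ S S', inner ℝ (X S) (X S') = if S = S' then (2:ℝ)^N else 0 := by
    intro S S'
    have : inner ℝ (X S) (X S') = ∑ σ : J → Bool, chi S σ * chi S' σ := by
      simp [X, PiLp.inner_apply, mul_comm]
    rw [this]
    split_ifs with h
    · subst h; simp [chi_sq, N]
    · exact chi_orth h
  let Y : Finset J → EuclideanSpace ℝ (J → Bool) := fun S => (√((2:ℝ)^N))⁻¹ • X S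
  have hY : Orthonormal ℝ Y := by
    rw [orthonormal_iff_ite]
    intro S S'
    simp only [Y, inner_smul_left, inner_smul_right, hXX]
    split_ifs with h
    · have : (0:ℝ) < √((2:ℝ)^N) := by positivity
      have h3 : √((2:ℝ)^N) * √((2:ℝ)^N) = (2:ℝ)^N := Real.mul_self_sqrt (by positivity)
      simp only [conj_trivial]
      field_simp
      nlinarith [h3]
    · simp
  have hB : ∀ i, ∑ S ∈ A, (inner ℝ (X S) (e i : EuclideanSpace ℝ (J → Bool)))^2 ≤ (2:ℝ)^N := by
    intro i
    have := hY.sum_inner_products_le (e i : EuclideanSpace ℝ (J → Bool)) (s := A)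
    have hn : ‖(e i : EuclideanSpace ℝ (J → Bool))‖ = 1 := by
      rw [← Submodule.coe_norm]
      exact e.orthonormal.1 i
    rw [hn] at this
    simp only [Y, inner_smul_left, norm_mul, mul_pow, Real.norm_eq_abs, sq_abs] at this
    rw [← Finset.mul_sum] at this
    simp only [conj_trivial, inv_pow] at this
    rw [Real.sq_sqrt (by positivity)] at this
    have h4 : (0:ℝ) < 2^N := by positivity
    rw [inv_mul_le_iff₀ h4] at this
    simpa using this
  have hS : ∀ S ∈ A, (F.card : ℝ) ≤ 9^t * ∑ i, (inner ℝ (X S) (e i : EuclideanSpace ℝ (J → Bool)))^2 := by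
    intro S hSA
    have hin : inner ℝ (X S) (g S) = ∑ σ ∈ F, chi S σ * g S σ := by
      have : inner ℝ (X S) (g S) = ∑ σ : J → Bool, chi S σ * g S σ := by
        simp [X, PiLp.inner_apply, mul_comm]
      rw [this]
      symm
      apply Finset.sum_subset (Finset.subset_univ _)
      intro σ _ h
      rw [hF S hSA σ h, mul_zero]
    have hno : ‖g S‖^2 ≤ F.card * ((3*a/2)^t)^2 := by
      rw [EuclideanSpace.norm_sq_eq]
      have : ∑ σ, ‖g S σ‖^2 = ∑ σ ∈ F, ‖g S σ‖^2 := by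
        symm
        apply Finset.sum_subset (Finset.subset_univ _)
        intro σ _ h
        rw [hF S hSA σ h]; simp
      rw [this, ← nsmul_eq_mul]
      apply Finset.sum_le_card_nsmul
      intro σ hσ
      have e1 : ‖g S σ‖^2 = (chi S σ * g S σ)^2 := by
        rw [mul_pow, pow_two (chi S σ), chi_sq]; simp
      rw [e1]
      have := h1 S hSA σ hσ
      have h0 : 0 ≤ (a/2)^t := by positivity
      exact pow_le_pow_left₀ (by linarith) (h2 S hSA σ hσ) 2
    have hlo : F.card * (a/2)^t ≤ inner ℝ (X S) (g S) := by
      rw [hin, ← nsmul_eq_mul]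
      exact Finset.card_nsmul_le_sum _ _ _ (h1 S hSA)
    have hexp : inner ℝ (X S) (g S) = ∑ i, inner ℝ (X S) (e i : EuclideanSpace ℝ (J → Bool)) * 
        inner ℝ (e i : EuclideanSpace ℝ (J → Bool)) (g S) := by
      have h5 := e.sum_repr' ⟨g S, hg S hSA⟩
      have h6 := congrArg (fun v : V => (v : EuclideanSpace ℝ (J → Bool))) h5
      simp only [Submodule.coe_sum, Submodule.coe_smul, Submodule.coe_inner] at h6
      conv_lhs => rw [← h6]
      rw [inner_sum]
      refine Finset.sum_congr rfl fun i _ => ?_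
      rw [inner_smul_right, mul_comm]
    have hpars : ∑ i, (inner ℝ (e i : EuclideanSpace ℝ (J → Bool)) (g S))^2 = ‖g S‖^2 := by
      have := e.sum_sq_norm_inner_right ⟨g S, hg S hSA⟩
      simpa using this
    have hcs := Finset.sum_mul_sq_le_sq_mul_sq Finset.univ
      (fun i => inner ℝ (X S) (e i : EuclideanSpace ℝ (J → Bool)))
      (fun i => inner ℝ (e i : EuclideanSpace ℝ (J → Bool)) (g S))
    rw [← hexp, hpars] at hcs
    set W := ∑ i, (inner ℝ (X S) (e i : EuclideanSpace ℝ (J → Bool)))^2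
    have hW : 0 ≤ W := Finset.sum_nonneg fun i _ => sq_nonneg _
    rcases Nat.eq_zero_or_pos F.card with h0 | h0
    · rw [h0]; push_cast; positivity
    · have h0' : (0:ℝ) < F.card := by exact_mod_cast h0
      have h7 : (F.card * (a/2)^t)^2 ≤ W * (F.card * ((3*a/2)^t)^2) :=
        (pow_le_pow_left₀ (by positivity) hlo 2).trans (hcs.trans (by gcongr))
      have h8 : ((3*a/2)^t)^2 = 9^t * ((a/2)^t)^2 := by
        rw [← pow_mul, mul_comm t 2, pow_mul, ← pow_mul (a/2), mul_comm t 2, pow_mul (a/2), ← mul_pow]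
        congr 1; ring
      rw [h8] at h7
      have h9 : (0:ℝ) < F.card * ((a/2)^t)^2 := by positivity
      apply le_of_mul_le_mul_right _ h9
      nlinarith [h7]
  have hfin : (A.card : ℝ) * F.card ≤ 9^t * Fintype.card ι * 2^N := by
    calc (A.card : ℝ) * F.card ≤ ∑ S ∈ A, 9^t * ∑ i, (inner ℝ (X S) (e i : EuclideanSpace ℝ (J → Bool)))^2 := by
          rw [← nsmul_eq_mul]; exact Finset.card_nsmul_le_sum _ _ _ hS
      _ = 9^t * ∑ i, ∑ S ∈ A, (inner ℝ (X S) (e i : EuclideanSpace ℝ (J → Bool)))^2 := by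
          rw [← Finset.mul_sum, Finset.sum_comm]
      _ ≤ 9^t * ∑ i : Fin (Module.finrank ℝ V), (2:ℝ)^N := by
          gcongr with i; exact hB i
      _ = 9^t * Module.finrank ℝ V * 2^N := by simp; ring
      _ ≤ _ := by gcongr
  exact_mod_cast hfin

lemma count_small {J : Type} [Fintype J] [DecidableEq J] (p b : ℕ) (hp : 2 * (p+2) ≤ 2^p)
    (hJ : Fintype.card J = (2^p)^2 * b) :
    ((Finset.univ : Finset (Finset J)).filter (fun B => B.card ≤ b)).card ≤ 2^(2^p*b) := by
  set 𝓑 := (Finset.univ : Finset (Finset J)).filter (fun B => B.card ≤ b)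
  set x : ℝ := 1 / (4 * 2^p) with hx
  have hx0 : 0 < x := by positivity
  have hx1 : x ≤ 1 := by
    rw [hx, div_le_one (by positivity)]
    have : (1:ℝ) ≤ 2^p := one_le_pow₀ (by norm_num)
    linarith
  have h1 : (𝓑.card : ℝ) * x^b ≤ (1+x)^(Fintype.card J) := by
    have e : (1+x)^(Fintype.card J) = ∑ B : Finset J, x^B.card := by
      have := Finset.sum_pow_mul_eq_add_pow x 1 (Finset.univ : Finset J)
      rw [Finset.powerset_univ, Finset.card_univ] at this
      rw [add_comm, ← this]
      simp
    rw [e, ← nsmul_eq_mul]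
    calc 𝓑.card • x^b ≤ ∑ B ∈ 𝓑, x^B.card := by
          apply Finset.card_nsmul_le_sum
          intro B hB
          exact pow_le_pow_of_le_one hx0.le hx1 (Finset.mem_filter.1 hB).2
      _ ≤ _ := Finset.sum_le_sum_of_subset_of_nonneg (Finset.subset_univ _)
          (fun _ _ _ => by positivity)
  have h2 : (1+x)^(Fintype.card J) ≤ Real.exp (1/4) ^ (2^p * b) := by
    have h3 : 1 + x ≤ Real.exp x := by rw [add_comm]; exact Real.add_one_le_exp x
    calc (1+x)^(Fintype.card J) ≤ (Real.exp x)^(Fintype.card J) := by gcongr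
      _ = Real.exp (1/4) ^ (2^p * b) := by
        rw [← Real.exp_nat_mul, ← Real.exp_nat_mul, hJ]
        congr 1
        rw [hx]; push_cast; field_simp
  have h4 : Real.exp (1/4)^2 ≤ 2 := by
    rw [← Real.exp_nat_mul]
    have h5 : Real.exp ((2:ℕ) * (1/4)) ^ 2 ≤ 2^2 := by
      rw [← Real.exp_nat_mul]
      have : ((2:ℕ):ℝ) * (((2:ℕ):ℝ) * (1/4)) = 1 := by norm_num
      rw [this]
      have := Real.exp_one_lt_d9
      linarith
    exact le_of_sq_le_sq h5 (by norm_num)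
  have h6 : (𝓑.card : ℝ)^2 ≤ ((2:ℝ)^(2^p*b))^2 := by
    have h7 : x^b * (2:ℝ)^((p+2)*b) = 1 := by
      rw [pow_mul, ← mul_pow, hx]
      have : (1 / (4 * 2^p) * 2^(p+2) : ℝ) = 1 := by
        rw [pow_add]; field_simp; norm_num
      rw [this, one_pow]
    have h8 : (𝓑.card : ℝ) ≤ Real.exp (1/4) ^ (2^p * b) * (2:ℝ)^((p+2)*b) := by
      calc (𝓑.card : ℝ) = 𝓑.card * x^b * (2:ℝ)^((p+2)*b) := by rw [mul_assoc, h7, mul_one]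
        _ ≤ _ := by gcongr; exact h1.trans h2
    calc (𝓑.card : ℝ)^2 ≤ (Real.exp (1/4) ^ (2^p * b) * (2:ℝ)^((p+2)*b))^2 := by gcongr
      _ = (Real.exp (1/4)^2) ^ (2^p * b) * (2:ℝ)^(2*(p+2)*b) := by
        rw [mul_pow, ← pow_mul, ← pow_mul, ← pow_mul]; congr 2 <;> ring
      _ ≤ 2 ^ (2^p * b) * (2:ℝ)^(2^p*b) := by
        gcongr
        norm_num
      _ = _ := by ring
  have h9 := le_of_sq_le_sq h6 (by positivity)
  exact_mod_cast h9

lemma choose_big (q M t : ℕ) (h : t * q + t ≤ M + 1) : q^t ≤ M.choose t := by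
  have h1 := Nat.pow_le_choose (α := ℝ) t M
  have h2 : (t * q) ^ t ≤ (M + 1 - t)^t := Nat.pow_le_pow_left (by omega) t
  have h3 : (Nat.factorial t : ℝ) ≤ (t:ℝ)^t := by exact_mod_cast Nat.factorial_le_pow t
  rw [div_le_iff₀ (by positivity)] at h1
  have h2' : ((t:ℝ) * q)^t ≤ ((M + 1 - t : ℕ):ℝ)^t := by exact_mod_cast h2
  rw [mul_pow] at h2'
  rcases Nat.eq_zero_or_pos t with h0 | h0
  · subst h0; simp
  have h4 : (0:ℝ) < (t:ℝ)^t := by positivity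
  have : (q:ℝ)^t ≤ M.choose t := by
    apply le_of_mul_le_mul_left _ h4
    calc (t:ℝ)^t * q^t ≤ _ := h2'
      _ ≤ _ := h1
      _ ≤ M.choose t * (t:ℝ)^t := by gcongr
      _ = _ := by ring
  exact_mod_cast this

lemma prod_mono {d m n : ℕ} (u : Fin m → Fin d → Fin n → ℝ) (S : Finset (Fin d → Fin n))
    (s : S → Fin m) :
    ∏ j : S, ∏ i, u (s j) i (j.1 i) =
    ((∑ j : S, (Finset.univ : Finset (Fin d)).val.map
      (fun i => ((s j, i, j.1 i) : Fin m × Fin d × Fin n))).map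
      (fun κ => u κ.1 κ.2.1 κ.2.2)).prod := by
  classical
  rw [← Multiset.coe_mapAddMonoidHom, map_sum, Multiset.prod_sum]
  refine Finset.prod_congr rfl fun j _ => ?_
  rw [Multiset.coe_mapAddMonoidHom, Multiset.map_map]
  rfl

lemma comb (d m n b : ℕ) (hn : n ^ d = (2^(d+8))^2 * b) (hb : 1 ≤ b)
    (hm : m * (d * n) ≤ 2^(d+8) * b) (A : ℝ) (hA : 0 < A) :
    ∃ σ : (Fin d → Fin n) → Bool, ∀ u : Fin m → Fin d → Fin n → ℝ,
      b < ((Finset.univ : Finset (Fin d → Fin n)).filter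
        (fun j => A / 2 < |A * sg (σ j) - ∑ s, ∏ i, u s i (j i)|)).card := by
  classical
  by_contra hc
  push Not at hc
  choose u hu using hc
  set t := 2^(d+8) * b with ht
  have ht1 : 1 ≤ t := Nat.mul_pos (by positivity) hb
  have hJ : Fintype.card (Fin d → Fin n) = (2^(d+8))^2 * b := by simp [hn]
  let T : ((Fin d → Fin n) → Bool) → (Fin d → Fin n) → ℝ := fun σ j => ∑ s, ∏ i, u σ s i (j i)
  let bad : ((Fin d → Fin n) → Bool) → Finset (Fin d → Fin n) := fun σ =>
    (Finset.univ : Finset (Fin d → Fin n)).filter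
        (fun j => A / 2 < |A * sg (σ j) - T σ j|)
  set 𝓑 := (Finset.univ : Finset (Finset (Fin d → Fin n))).filter (fun B => B.card ≤ b) with h𝓑
  have hpp : 2 * (d + 8 + 2) ≤ 2^(d+8) := by
    have : d < 2^d := Nat.lt_two_pow_self
    rw [pow_add]; omega
  have hcount : 𝓑.card ≤ 2^t := count_small (d+8) b hpp hJ
  have hbad : ∀ σ ∈ (Finset.univ : Finset ((Fin d → Fin n) → Bool)), bad σ ∈ 𝓑 := by
    intro σ _
    rw [h𝓑, Finset.mem_filter]
    exact ⟨Finset.mem_univ _, hu σ⟩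
  obtain ⟨B, hB, hBF⟩ : ∃ B ∈ 𝓑, 2^(n^d) ≤ 2^t * ((Finset.univ : Finset ((Fin d → Fin n) → Bool)).filter (fun σ => bad σ = B)).card := by
    by_contra hcon
    push Not at hcon
    have h1 := Finset.card_eq_sum_card_fiberwise (f := bad) (s := Finset.univ) (t := 𝓑) (by
      intro σ h; exact hbad σ (Finset.mem_univ _))
    have hcard : (Finset.univ : Finset ((Fin d → Fin n) → Bool)).card = 2^(n^d) := by
      simp
    rw [hcard] at h1
    have hne : 𝓑.Nonempty := ⟨_, hbad (fun _ => true) (Finset.mem_univ _)⟩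
    have h2 : ∑ B ∈ 𝓑, 2^t * ((Finset.univ : Finset ((Fin d → Fin n) → Bool)).filter (fun σ => bad σ = B)).card < ∑ B ∈ 𝓑, 2^(n^d) :=
      Finset.sum_lt_sum_of_nonempty hne hcon
    rw [← Finset.mul_sum, ← h1, Finset.sum_const, smul_eq_mul] at h2
    exact absurd h2 (not_lt.2 (Nat.mul_le_mul_right _ hcount))
  set F := (Finset.univ : Finset ((Fin d → Fin n) → Bool)).filter (fun σ => bad σ = B) with hF
  have hFpos : 0 < F.card := by
    rcases Nat.eq_zero_or_pos F.card with h | h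
    · rw [h, mul_zero] at hBF
      exact absurd hBF (not_le.2 (by positivity))
    · exact h
  set 𝒜 := Finset.powersetCard t (Finset.univ \ B) with h𝒜
  have hBb : B.card ≤ b := (Finset.mem_filter.1 hB).2
  have hAcard : (2^(d+6))^t ≤ 𝒜.card := by
    rw [h𝒜, Finset.card_powersetCard, Finset.card_sdiff_of_subset (Finset.subset_univ _), Finset.card_univ, hJ]
    apply choose_big
    rw [ht]
    have e1 : 2^(d+8) = 4 * 2^(d+6) := by rw [pow_add, pow_add]; ring
    have e2 : 1 ≤ 2^(d+6) := Nat.one_le_two_pow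
    rw [e1]
    set q := 2^(d+6)
    have : 4 * q * b * q + 4 * q * b + b ≤ (4*q)^2*b := by nlinarith [Nat.mul_le_mul (Nat.mul_le_mul e2 hb) e2, Nat.mul_le_mul_right b e2, Nat.mul_le_mul_right (b*q) e2]
    omega
  -- bounds
  have hgood : ∀ σ ∈ F, ∀ j ∈ Finset.univ \ B, A/2 ≤ sg (σ j) * T σ j ∧ sg (σ j) * T σ j ≤ 3 * A / 2 := by
    intro σ hσ j hj
    have h1 : bad σ = B := (Finset.mem_filter.1 hσ).2
    have h2 : j ∉ bad σ := by rw [h1]; exact (Finset.mem_sdiff.1 hj).2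
    have h3 : |A * sg (σ j) - T σ j| ≤ A/2 := by
      by_contra h
      exact h2 (Finset.mem_filter.2 ⟨Finset.mem_univ _, not_le.1 h⟩)
    rw [abs_le] at h3
    cases hh : σ j <;> simp only [hh, sg] at h3 ⊢ <;> simp at h3 ⊢ <;> constructor <;> linarith
  let K := Fin m × Fin d × Fin n
  let G : Sym K (d * t) → EuclideanSpace ℝ ((Fin d → Fin n) → Bool) := fun α =>
    WithLp.toLp 2 (fun σ => if σ ∈ F then ((α : Multiset K).map (fun κ => u σ κ.1 κ.2.1 κ.2.2)).prod else 0)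
  let g : Finset (Fin d → Fin n) → EuclideanSpace ℝ ((Fin d → Fin n) → Bool) := fun S =>
    WithLp.toLp 2 (fun σ => if σ ∈ F then ∏ j ∈ S, T σ j else 0)
  have hchi : ∀ S (σ : (Fin d → Fin n) → Bool), σ ∈ F → chi S σ * g S σ = ∏ j ∈ S, (sg (σ j) * T σ j) := by
    intro S σ hσ
    simp only [g, if_pos hσ, chi, Finset.prod_mul_distrib]
  have hmain := core1 t F 𝒜 G g (by
    intro S hS
    have hSc : S.card = t := (Finset.mem_powersetCard.1 hS).2
    let αs : (S → Fin m) → Sym K (d*t) := fun s =>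
      ⟨∑ j : S, (Finset.univ : Finset (Fin d)).val.map (fun i => ((s j, i, j.1 i) : K)), by
        rw [Multiset.card_sum]; simp [hSc, mul_comm]⟩
    have hgs : g S = ∑ s : S → Fin m, G (αs s) := by
      ext σ
      rw [WithLp.ofLp_sum, Finset.sum_apply]
      simp only [g, G]
      by_cases hσ : σ ∈ F
      · simp only [if_pos hσ]
        rw [← Finset.prod_coe_sort]
        simp only [T]
        rw [Finset.prod_univ_sum, Fintype.piFinset_univ]
        refine Finset.sum_congr rfl fun s _ => ?_
        exact prod_mono (u σ) S s
      · simp [hσ]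
    rw [hgs]
    exact Submodule.sum_mem _ fun α _ => Submodule.subset_span ⟨_, rfl⟩)
    (by
      intro S _ σ hσ
      simp only [g, if_neg hσ]) A hA
    (by
      intro S hS σ hσ
      have hS' := Finset.mem_powersetCard.1 hS
      rw [hchi S σ hσ, ← hS'.2]
      rw [← Finset.prod_const]
      exact Finset.prod_le_prod (fun _ _ => by positivity) (fun j hj => (hgood σ hσ j (hS'.1 hj)).1))
    (by
      intro S hS σ hσ
      have hS' := Finset.mem_powersetCard.1 hS
      rw [hchi S σ hσ, ← hS'.2]
      rw [← Finset.prod_const]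
      exact Finset.prod_le_prod (fun j hj => le_trans (by positivity) (hgood σ hσ j (hS'.1 hj)).1)
        (fun j hj => (hgood σ hσ j (hS'.1 hj)).2))
  have hsym : Fintype.card (Sym K (d*t)) ≤ 2^((d+1)*t) := by
    rw [Sym.card_sym_eq_choose]
    refine (Nat.choose_le_two_pow _ _).trans (Nat.pow_le_pow_right (by norm_num) ?_)
    have : Fintype.card K = m * (d * n) := by simp [K]
    rw [this]
    have : (d+1)*t = d*t + t := by ring
    omega
  have hJ' : Fintype.card (Fin d → Fin n) = n^d := by simp
  rw [hJ'] at hmain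
  have h1 : (2^(d+6))^t * F.card ≤ (9 * 2^(d+1) * 2)^t * F.card := by
    calc (2^(d+6))^t * F.card ≤ 𝒜.card * F.card := Nat.mul_le_mul_right _ hAcard
      _ ≤ _ := hmain
      _ ≤ 9^t * 2^((d+1)*t) * (2^t * F.card) := by gcongr
      _ = _ := by rw [mul_pow, mul_pow, ← pow_mul]; ring
  have h2 := Nat.le_of_mul_le_mul_right h1 hFpos
  have h3 := (Nat.pow_le_pow_iff_left (by omega)).1 h2
  rw [pow_add, pow_add] at h3
  have : 0 < 2^d := by positivity
  omega

open scoped ContDiff in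
lemma exists_bump (r : ℕ) : ∃ (φ : ℝ → ℝ) (M : ℝ), 1 ≤ M ∧ ContDiff ℝ ∞ φ ∧
    (∀ x ∈ Set.Icc (3/8 : ℝ) (5/8), φ x = 1) ∧
    (∀ l x, x ∉ Set.Ioo (0:ℝ) 1 → iteratedDeriv l φ x = 0) ∧
    ∀ l ≤ r, ∀ x, |iteratedDeriv l φ x| ≤ M := by
  let B : ContDiffBump (1/2 : ℝ) := ⟨1/8, 1/4, by norm_num, by norm_num⟩
  have hcd : ContDiff ℝ ∞ (B : ℝ → ℝ) := B.contDiff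
  have hsup : ∀ l x, x ∉ Set.Ioo (0:ℝ) 1 → iteratedDeriv l (B : ℝ → ℝ) x = 0 := by
    intro l x hx
    by_contra h
    have h1 : x ∈ tsupport (B : ℝ → ℝ) := by
      apply support_iteratedFDeriv_subset (𝕜 := ℝ) l
      rw [Function.mem_support]
      intro h2
      apply h
      rw [iteratedDeriv, h2]; simp
    rw [B.tsupport_eq, Real.closedBall_eq_Icc] at h1
    apply hx
    simp only [B] at h1
    constructor <;> linarith [h1.1, h1.2]
  have hbd : ∀ l, ∃ C, ∀ x, |iteratedDeriv l (B : ℝ → ℝ) x| ≤ C := by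
    intro l
    have hc : Continuous (iteratedDeriv l (B : ℝ → ℝ)) := 
      hcd.continuous_iteratedDeriv l (by exact_mod_cast le_top)
    obtain ⟨C, hC⟩ := isCompact_Icc.exists_bound_of_continuousOn (s := Set.Icc (0:ℝ) 1) hc.continuousOn
    refine ⟨max C 0, fun x => ?_⟩
    by_cases hx : x ∈ Set.Icc (0:ℝ) 1
    · exact (hC x hx).trans (le_max_left _ _)
    · rw [hsup l x (fun h => hx ⟨h.1.le, h.2.le⟩)]; simp
  choose C hC using hbd
  refine ⟨B, 1 + ∑ l ∈ Finset.range (r+1), C l, ?_, hcd, ?_, hsup, ?_⟩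
  · have : 0 ≤ ∑ l ∈ Finset.range (r+1), C l :=
      Finset.sum_nonneg fun l _ => (abs_nonneg _).trans (hC l 0)
    linarith
  · intro x hx
    apply B.one_of_mem_closedBall
    rw [Real.closedBall_eq_Icc]
    simp only [B]
    constructor <;> linarith [hx.1, hx.2]
  · intro l hl x
    have := Finset.single_le_sum (f := C) (s := Finset.range (r+1))
      (fun l _ => (abs_nonneg _).trans (hC l 0)) (Finset.mem_range.2 (Nat.lt_succ_of_le hl))
    linarith [hC l x]

noncomputable def Phi (d n : ℕ) (φ : ℝ → ℝ) (A : ℝ) (σ : (Fin d → Fin n) → Bool) (β : Fin d → ℕ)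
    (x : Fin d → ℝ) : ℝ :=
  A * ∑ j : Fin d → Fin n, sg (σ j) *
    ∏ i, ((n:ℝ) ^ β i * iteratedDeriv (β i) φ (n * x i - (j i : ℕ)))

open scoped ContDiff in
lemma Phi_contDiff (d n : ℕ) (φ : ℝ → ℝ) (hφ : ContDiff ℝ ∞ φ) (A : ℝ)
    (σ : (Fin d → Fin n) → Bool) (β : Fin d → ℕ) : ContDiff ℝ ∞ (Phi d n φ A σ β) := by
  unfold Phi
  refine contDiff_const.mul (ContDiff.sum fun j _ => contDiff_const.mul (contDiff_prod fun i _ => contDiff_const.mul ?_))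
  have h1 : ContDiff ℝ ∞ (iteratedDeriv (β i) φ) := by
    rw [iteratedDeriv_eq_iterate]
    exact ContDiff.iterate_deriv (β i) hφ
  exact h1.comp ((contDiff_const.mul (contDiff_apply ℝ ℝ i)).sub contDiff_const)

lemma unitCube_uniqueDiff (d : ℕ) : UniqueDiffOn ℝ (unitCube d) := by
  apply UniqueDiffOn.univ_pi
  intro i
  exact uniqueDiffOn_Icc zero_lt_one

open scoped ContDiff in
lemma Phi_pderm (d n : ℕ) (φ : ℝ → ℝ) (hφ : ContDiff ℝ ∞ φ) (A : ℝ)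
    (σ : (Fin d → Fin n) → Bool) (β : Fin d → ℕ) (k : Fin d) (x : Fin d → ℝ) (hx : x ∈ unitCube d) :
    fderivWithin ℝ (Phi d n φ A σ β) (unitCube d) x (Pi.single k 1) =
      Phi d n φ A σ (β + Pi.single k 1) x := by
  have hd : DifferentiableAt ℝ (Phi d n φ A σ β) x :=
    (Phi_contDiff d n φ hφ A σ β).differentiable (by simp) x
  rw [hd.fderivWithin (unitCube_uniqueDiff d x hx)]
  have h1 := (hd.hasFDerivAt.hasLineDerivAt (Pi.single k 1))
  have h2 : HasLineDerivAt ℝ (Phi d n φ A σ β) (Phi d n φ A σ (β + Pi.single k 1) x) x (Pi.single k 1) := by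
    unfold HasLineDerivAt Phi
    apply HasDerivAt.const_mul
    apply HasDerivAt.fun_sum
    intro j _
    apply HasDerivAt.const_mul
    have e1 : ∀ t : ℝ, ∏ i, ((n:ℝ) ^ β i * iteratedDeriv (β i) φ (n * (x + t • (Pi.single k 1 : Fin d → ℝ)) i - (j i : ℕ)))
        = ((n:ℝ) ^ β k * iteratedDeriv (β k) φ (n * (x k + t) - (j k : ℕ))) * 
          ∏ i ∈ Finset.univ.erase k, ((n:ℝ) ^ β i * iteratedDeriv (β i) φ (n * x i - (j i : ℕ))) := by
      intro t
      rw [← Finset.mul_prod_erase _ _ (Finset.mem_univ k)]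
      congr 1
      · simp
      · refine Finset.prod_congr rfl fun i hi => ?_
        have : i ≠ k := Finset.ne_of_mem_erase hi
        simp [this]
    have e2 : ∏ i, ((n:ℝ) ^ (β + Pi.single k 1 : Fin d → ℕ) i * iteratedDeriv ((β + Pi.single k 1 : Fin d → ℕ) i) φ (n * x i - (j i : ℕ)))
        = ((n:ℝ) ^ (β k + 1) * iteratedDeriv (β k + 1) φ (n * x k - (j k : ℕ))) * 
          ∏ i ∈ Finset.univ.erase k, ((n:ℝ) ^ β i * iteratedDeriv (β i) φ (n * x i - (j i : ℕ))) := by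
      rw [← Finset.mul_prod_erase _ _ (Finset.mem_univ k)]
      congr 1
      · simp
      · refine Finset.prod_congr rfl fun i hi => ?_
        have : i ≠ k := Finset.ne_of_mem_erase hi
        simp [this]
    simp_rw [e1]
    rw [e2]
    apply HasDerivAt.mul_const
    have h3 : HasDerivAt (iteratedDeriv (β k) φ) (iteratedDeriv (β k + 1) φ (n * x k - (j k : ℕ)))
        (n * (x k + 0) - (j k : ℕ)) := by
      rw [iteratedDeriv_succ, add_zero]
      exact (hφ.differentiable_iteratedDeriv (β k) (by exact_mod_cast WithTop.coe_lt_top _) _).hasDerivAt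
    have h4 : HasDerivAt (fun t : ℝ => (n:ℝ) * (x k + t) - (j k : ℕ)) n 0 := by
      have := (((hasDerivAt_id (0:ℝ)).const_add (x k)).const_mul (n:ℝ)).sub_const ((j k : ℕ):ℝ)
      simpa using this
    have h5 := (h3.comp (0:ℝ) h4).const_mul ((n:ℝ)^β k)
    have h6 : (n:ℝ) ^ (β k + 1) * iteratedDeriv (β k + 1) φ (n * x k - (j k : ℕ)) =
        (n:ℝ) ^ β k * (iteratedDeriv (β k + 1) φ (n * x k - (j k : ℕ)) * n) := by
      rw [pow_succ]; ring
    rw [h6]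
    exact h5
  exact h1.unique h2

open scoped ContDiff in
lemma Phi_iter (d n : ℕ) (φ : ℝ → ℝ) (hφ : ContDiff ℝ ∞ φ) (A : ℝ)
    (σ : (Fin d → Fin n) → Bool) (L : List (Fin d)) :
    ∃ β : Fin d → ℕ, ∑ i, β i = L.length ∧
      Set.EqOn (iterPDW d L (Phi d n φ A σ 0)) (Phi d n φ A σ β) (unitCube d) := by
  induction L with
  | nil => exact ⟨0, by simp, fun x _ => rfl⟩
  | cons k L ih =>
    obtain ⟨β, h1, h2⟩ := ih
    refine ⟨β + Pi.single k 1, ?_, ?_⟩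
    · simp [Finset.sum_add_distrib, h1]
    · intro x hx
      rw [← Phi_pderm d n φ hφ A σ β k x hx]
      simp only [iterPDW, pdermW]
      rw [fderivWithin_congr h2 (h2 hx)]

lemma sum1 (n : ℕ) (g : ℝ → ℝ) (M : ℝ) (hM : 0 ≤ M) (h0 : ∀ x ∉ Set.Ioo (0:ℝ) 1, g x = 0)
    (h1 : ∀ x, |g x| ≤ M) (y : ℝ) : ∑ j : Fin n, |g (y - (j : ℕ))| ≤ M := by
  by_cases h : ∃ j : Fin n, y - (j : ℕ) ∈ Set.Ioo (0:ℝ) 1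
  · obtain ⟨j, hj⟩ := h
    rw [Finset.sum_eq_single j]
    · exact h1 _
    · intro i _ hij
      rw [h0, abs_zero]
      intro hi
      apply hij
      have a1 : ((i:ℕ):ℝ) < (j:ℕ) + 1 := by linarith [hi.1, hi.2, hj.1, hj.2]
      have a2 : ((j:ℕ):ℝ) < (i:ℕ) + 1 := by linarith [hi.1, hi.2, hj.1, hj.2]
      have a1' : (i:ℕ) < (j:ℕ) + 1 := by exact_mod_cast a1
      have a2' : (j:ℕ) < (i:ℕ) + 1 := by exact_mod_cast a2
      exact Fin.ext (by omega)
    · simp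
  · push Not at h
    rw [Finset.sum_eq_zero]
    · exact hM
    · intro j _
      rw [h0 _ (h j), abs_zero]

lemma Phi_bound (d n r : ℕ) (φ : ℝ → ℝ) (M : ℝ) (hM : 1 ≤ M)
    (h0 : ∀ l x, x ∉ Set.Ioo (0:ℝ) 1 → iteratedDeriv l φ x = 0)
    (hb : ∀ l ≤ r, ∀ x, |iteratedDeriv l φ x| ≤ M) (A : ℝ) (hA : 0 ≤ A)
    (σ : (Fin d → Fin n) → Bool) (β : Fin d → ℕ) (hβ : ∑ i, β i ≤ r) (x : Fin d → ℝ) :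
    |Phi d n φ A σ β x| ≤ A * (n ^ (∑ i, β i) * M ^ d) := by
  unfold Phi
  rw [abs_mul, abs_of_nonneg hA]
  gcongr
  calc |∑ j : Fin d → Fin n, sg (σ j) *
    ∏ i, ((n:ℝ) ^ β i * iteratedDeriv (β i) φ (n * x i - (j i : ℕ)))|
      ≤ ∑ j : Fin d → Fin n, ∏ i, ((n:ℝ) ^ β i * |iteratedDeriv (β i) φ (n * x i - (j i : ℕ))|) := by
        refine (Finset.abs_sum_le_sum_abs _ _).trans (le_of_eq ?_)
        refine Finset.sum_congr rfl fun j _ => ?_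
        rw [abs_mul, sg_abs, one_mul, Finset.abs_prod]
        refine Finset.prod_congr rfl fun i _ => ?_
        rw [abs_mul, abs_of_nonneg (by positivity : (0:ℝ) ≤ (n:ℝ)^β i)]
    _ = ∏ i, ∑ j : Fin n, ((n:ℝ) ^ β i * |iteratedDeriv (β i) φ (n * x i - (j : ℕ))|) := by
        rw [Finset.prod_univ_sum, Fintype.piFinset_univ]
    _ ≤ ∏ i, ((n:ℝ)^β i * M) := by
        apply Finset.prod_le_prod
        · intro i _
          exact Finset.sum_nonneg fun j _ => by positivity
        · intro i _
          rw [← Finset.mul_sum]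
          have hi : β i ≤ r := (Finset.single_le_sum (f := β) (fun _ _ => Nat.zero_le _) (Finset.mem_univ i)).trans hβ
          have := sum1 n (iteratedDeriv (β i) φ) M (by linarith) (h0 _) (hb _ hi) (n * x i)
          gcongr
    _ = _ := by
        rw [Finset.prod_mul_distrib, Finset.prod_pow_eq_pow_sum]
        simp

lemma Phi_val (d n : ℕ) (hn : 1 ≤ n) (φ : ℝ → ℝ)
    (h1 : ∀ x ∈ Set.Icc (3/8 : ℝ) (5/8), φ x = 1)
    (h0 : ∀ l x, x ∉ Set.Ioo (0:ℝ) 1 → iteratedDeriv l φ x = 0) (A : ℝ)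
    (σ : (Fin d → Fin n) → Bool) (j : Fin d → Fin n) (z : Fin d → ℝ)
    (hz : ∀ i, z i ∈ Set.Icc (3/8 : ℝ) (5/8)) :
    Phi d n φ A σ 0 ((n:ℝ)⁻¹ • (z + fun i => ((j i : ℕ) : ℝ))) = A * sg (σ j) := by
  have hn0 : (n:ℝ) ≠ 0 := by positivity
  unfold Phi
  congr 1
  have key : ∀ i, (n:ℝ) * ((n:ℝ)⁻¹ • (z + fun i => ((j i : ℕ) : ℝ))) i = z i + (j i : ℕ) := by
    intro i
    simp only [Pi.smul_apply, Pi.add_apply, smul_eq_mul]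
    field_simp
  rw [Finset.sum_eq_single j]
  · rw [Finset.prod_eq_one, mul_one]
    intro i _
    rw [key]
    simp [h1 _ (hz i)]
  · intro j' _ hj
    obtain ⟨i, hi⟩ := Function.ne_iff.1 hj
    rw [Finset.prod_eq_zero (Finset.mem_univ i), mul_zero]
    rw [key, h0, mul_zero]
    intro h
    have hzi := hz i
    apply hi
    have a1 : ((j' i:ℕ):ℝ) < (j i:ℕ) + 1 := by linarith [h.1, h.2, hzi.1, hzi.2]
    have a2 : ((j i:ℕ):ℝ) < (j' i:ℕ) + 1 := by linarith [h.1, h.2, hzi.1, hzi.2]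
    have a1' : (j' i:ℕ) < (j i:ℕ) + 1 := by exact_mod_cast a1
    have a2' : (j i:ℕ) < (j' i:ℕ) + 1 := by exact_mod_cast a2
    exact Fin.ext (by omega)
  · simp

lemma sample (d n : ℕ) (hn : 1 ≤ n) (H : (Fin d → ℝ) → ℝ) (hH0 : ∀ x, 0 ≤ H x)
    (hH : IntegrableOn H (unitCube d)) :
    ∃ z : Fin d → ℝ, (∀ i, z i ∈ Set.Icc (3/8 : ℝ) (5/8)) ∧
      ∑ j : Fin d → Fin n, H ((n:ℝ)⁻¹ • (z + fun i => ((j i : ℕ) : ℝ))) ≤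
        4 ^ d * (n ^ d * ∫ x in unitCube d, H x) := by
  have hn0 : (0:ℝ) < n := by exact_mod_cast hn
  let Z : Set (Fin d → ℝ) := Set.univ.pi fun _ => Set.Icc (3/8 : ℝ) (5/8)
  let v : (Fin d → Fin n) → (Fin d → ℝ) := fun j i => ((j i : ℕ) : ℝ)
  let E : (Fin d → Fin n) → Set (Fin d → ℝ) := fun j => (fun x => (n:ℝ) • x - v j) ⁻¹' Z
  have hZm : MeasurableSet Z := MeasurableSet.univ_pi fun _ => measurableSet_Icc
  have hEm : ∀ j, MeasurableSet (E j) := fun j => by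
    exact (by fun_prop : Measurable (fun x : Fin d → ℝ => (n:ℝ) • x - v j)) hZm
  have hZv : (volume Z) = ENNReal.ofReal ((1/4)^d) := by
    rw [volume_pi_pi]
    simp only [Real.volume_Icc, Finset.prod_const, Finset.card_univ, Fintype.card_fin]
    rw [← ENNReal.ofReal_pow (by norm_num)]
    norm_num
  have hEC : ∀ j, E j ⊆ unitCube d := by
    intro j x hx i _
    have h := hx i (Set.mem_univ i)
    simp only [Pi.sub_apply, Pi.smul_apply, smul_eq_mul, v] at h
    have h2 : ((j i : ℕ):ℝ) + 1 ≤ n := by exact_mod_cast (j i).2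
    have h3 : (0:ℝ) ≤ (j i : ℕ) := by positivity
    constructor
    · by_contra hc
      push Not at hc
      nlinarith [h.1]
    · by_contra hc
      push Not at hc
      nlinarith [h.2]
  have hED : Pairwise (Function.onFun Disjoint E) := by
    intro j j' hjj
    rw [Function.onFun, Set.disjoint_left]
    intro x hx hx'
    apply hjj
    ext i
    have h := hx i (Set.mem_univ i)
    have h' := hx' i (Set.mem_univ i)
    simp only [Pi.sub_apply, Pi.smul_apply, smul_eq_mul, v] at h h'
    have a1 : ((j' i:ℕ):ℝ) < (j i:ℕ) + 1 := by linarith [h.1, h.2, h'.1, h'.2]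
    have a2 : ((j i:ℕ):ℝ) < (j' i:ℕ) + 1 := by linarith [h.1, h.2, h'.1, h'.2]
    have a1' : (j' i:ℕ) < (j i:ℕ) + 1 := by exact_mod_cast a1
    have a2' : (j i:ℕ) < (j' i:ℕ) + 1 := by exact_mod_cast a2
    omega
  have hind : ∀ j, Z.indicator (fun z => H ((n:ℝ)⁻¹ • (z + v j))) =
      fun z => (E j).indicator H ((n:ℝ)⁻¹ • (z + v j)) := by
    intro j
    ext z
    have : (n:ℝ)⁻¹ • (z + v j) ∈ E j ↔ z ∈ Z := by
      simp only [E, Set.mem_preimage, smul_smul, mul_inv_cancel₀ hn0.ne', one_smul, add_sub_cancel_right]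
    by_cases hz : z ∈ Z
    · rw [Set.indicator_of_mem hz, Set.indicator_of_mem (this.2 hz)]
    · rw [Set.indicator_of_notMem hz, Set.indicator_of_notMem (fun h => hz (this.1 h))]
  have hEI : ∀ j, IntegrableOn H (E j) := fun j => hH.mono_set (hEC j)
  have hI : ∀ j, IntegrableOn (fun z => H ((n:ℝ)⁻¹ • (z + v j))) Z := by
    intro j
    rw [← integrable_indicator_iff hZm, hind]
    have h1 : Integrable ((E j).indicator H) := (integrable_indicator_iff (hEm j)).2 (hEI j)
    exact (h1.comp_smul (inv_ne_zero hn0.ne')).comp_add_right (v j)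
  have hint : ∀ j, ∫ z in Z, H ((n:ℝ)⁻¹ • (z + v j)) = n^d * ∫ x in E j, H x := by
    intro j
    rw [← integral_indicator hZm, hind, integral_add_right_eq_self (fun z => (E j).indicator H ((n:ℝ)⁻¹ • z)),
      Measure.integral_comp_smul, integral_indicator (hEm j)]
    simp
  have hsum : ∫ z in Z, ∑ j, H ((n:ℝ)⁻¹ • (z + v j)) ≤ n^d * ∫ x in unitCube d, H x := by
    rw [integral_finsetSum _ (fun j _ => hI j)]
    simp_rw [hint]
    rw [← Finset.mul_sum]
    gcongr
    rw [← integral_iUnion_fintype hEm hED hEI]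
    exact setIntegral_mono_set hH (Filter.Eventually.of_forall hH0) (Set.iUnion_subset hEC).eventuallyLE
  obtain ⟨z, hz, hzle⟩ := exists_le_setAverage (μ := volume) (s := Z)
    (f := fun z => ∑ j, H ((n:ℝ)⁻¹ • (z + v j)))
    (by rw [hZv]; simp) (by rw [hZv]; simp) (integrable_finsetSum _ fun j _ => hI j)
  refine ⟨z, fun i => hz i (Set.mem_univ i), hzle.trans ?_⟩
  rw [setAverage_eq, Measure.real, hZv, ENNReal.toReal_ofReal (by positivity), smul_eq_mul]
  have : ((1/4:ℝ)^d)⁻¹ = 4^d := by rw [← inv_pow]; norm_num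
  rw [this]
  gcongr

lemma unitCube_compact (d : ℕ) : IsCompact (unitCube d) := isCompact_univ_pi fun _ => isCompact_Icc

lemma unitCube_vol (d : ℕ) : volume (unitCube d) = 1 := by
  rw [unitCube, volume_pi_pi]; simp

lemma theta1_le_one (d r m : ℕ) (hd : 2 ≤ d) (f : (Fin d → ℝ) → ℝ) (hf : f ∈ UCr d r) :
    theta1 d m (volume.restrict (unitCube d)) f ≤ 1 := by
  have hmeas : MeasurableSet (unitCube d) := (unitCube_compact d).isClosed.measurableSet
  have hd0 : d ≠ 0 := by omega
  have h1 : theta1 d m (volume.restrict (unitCube d)) f ≤ ∫ x in unitCube d, |f x| := by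
    apply csInf_le
    · refine ⟨0, ?_⟩
      rintro _ ⟨u, _, _, rfl⟩
      exact integral_nonneg fun x => abs_nonneg _
    · refine ⟨fun _ _ _ => 0, fun _ _ => measurable_const, ?_, ?_⟩
      · simp [hd0]
      · simp [hd0]
  have h2 : ‖∫ x in unitCube d, |f x|‖ ≤ 1 * (volume (unitCube d)).toReal := by
    apply norm_setIntegral_le_of_norm_le_const
    · rw [unitCube_vol]; simp
    · intro x hx
      have := hf.2 [] (by simp) x hx
      simpa [iterPDW] using this
  rw [unitCube_vol] at h2
  have := (le_abs_self _).trans h2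
  simp at this
  exact h1.trans this

/-- Lower bound: `Θ_m(U(C^r[0,1]^d), L₁[0,1]^d) ≥ c(r,d) m^{-r/(d-1)}`. -/
theorem theta_UCr_lower (d r : ℕ) (hd : 2 ≤ d) (hr : 1 ≤ r) :
    ∃ c : ℝ, 0 < c ∧ ∀ m : ℕ, 1 ≤ m →
      c * (m : ℝ) ^ (-(r : ℝ) / ((d : ℝ) - 1)) ≤
        ⨆ f ∈ UCr d r, theta1 d m (volume.restrict (unitCube d)) f := by
  obtain ⟨φ, M, hM, hφ, hφ1, hφ0, hφb⟩ := exists_bump r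
  set a : ℕ := 2^(d+8) with ha
  have ha1 : 1 ≤ a := Nat.one_le_two_pow
  have hM0 : 0 < M := by linarith
  have haR : (0:ℝ) < a := by exact_mod_cast ha1
  have hdR : (0:ℝ) < d := by exact_mod_cast (by omega : 0 < d)
  refine ⟨(M^d)⁻¹ * ((2 * a * d : ℝ)^r)⁻¹ / (2 * 4^d * a^2), by positivity, ?_⟩
  intro m hm
  have hmR : (1:ℝ) ≤ m := by exact_mod_cast hm
  set w : ℝ := (m:ℝ) ^ (1 / ((d:ℝ) - 1)) with hw
  have hd1 : (0:ℝ) < (d:ℝ) - 1 := by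
    have : (2:ℝ) ≤ d := by exact_mod_cast hd
    linarith
  have hw1 : 1 ≤ w := Real.one_le_rpow hmR (by positivity)
  set y : ℕ := ⌈w⌉₊ with hy
  have hy1 : 1 ≤ y := Nat.one_le_ceil_iff.2 (by linarith)
  have hyw : (y:ℝ) ≤ 2 * w := by
    have := Nat.ceil_lt_add_one (by linarith : 0 ≤ w)
    linarith
  have hmy : m ≤ y^(d-1) := by
    have h1 : (m:ℝ) = w^(d-1) := by
      rw [hw, ← Real.rpow_natCast, ← Real.rpow_mul (by linarith), Nat.cast_sub (by omega)]
      push_cast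
      rw [one_div, inv_mul_cancel₀ hd1.ne', Real.rpow_one]
    have h2 : w^(d-1) ≤ (y:ℝ)^(d-1) := by
      gcongr; exact Nat.le_ceil w
    have : (m:ℝ) ≤ (y:ℝ)^(d-1) := by rw [h1]; exact h2
    exact_mod_cast this
  set n : ℕ := a * (d * y) with hn
  have hn1 : 1 ≤ n := Nat.mul_pos ha1 (Nat.mul_pos (by omega) hy1)
  have hnR : (0:ℝ) < n := by exact_mod_cast hn1
  obtain ⟨e, rfl⟩ : ∃ e, d = e + 2 := ⟨d - 2, by omega⟩
  set b : ℕ := a^e * ((e+2) * y)^(e+2) with hb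
  have hb1 : 1 ≤ b := Nat.mul_pos (by positivity) (pow_pos (Nat.mul_pos (by omega) hy1) _)
  have hnb : n^(e+2) = a^2 * b := by rw [hn, hb, mul_pow, pow_add a]; ring
  have hmk : m * ((e+2) * n) ≤ a * b := by
    have hmy' : m ≤ y^(e+1) := hmy
    have h1 : (e+2) ≤ (e+2)^(e+1) := Nat.le_self_pow (by omega) _
    have h2 : 1 ≤ a^e := Nat.one_le_pow _ _ ha1
    calc m * ((e+2) * n) ≤ y^(e+1) * ((e+2)^(e+1) * n) := by gcongr
      _ = a * (1 * ((e+2)*y)^(e+2)) := by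
        have : ∀ D : ℕ, y^(e+1) * (D^(e+1) * (a * (D * y))) = a * (1 * (D*y)^(e+2)) := by
          intro D; ring
        exact this (e+2)
      _ ≤ a * b := by rw [hb]; gcongr
  set A : ℝ := (M^(e+2) * n^r)⁻¹ with hA
  have hA0 : 0 < A := by positivity
  obtain ⟨σ, hσ⟩ := comb (e+2) m n b hnb hb1 hmk A hA0
  set f := Phi (e+2) n φ A σ 0 with hf
  have hfU : f ∈ UCr (e+2) r := by
    refine ⟨((Phi_contDiff _ n φ hφ A σ 0).of_le (by exact_mod_cast le_top)).contDiffOn, ?_⟩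
    intro L hL x hx
    obtain ⟨β, hβ, hE⟩ := Phi_iter (e+2) n φ hφ A σ L
    rw [hf, hE hx]
    refine (Phi_bound (e+2) n r φ M hM hφ0 hφb A hA0.le σ β (by omega) x).trans ?_
    rw [hβ, hA, inv_mul_le_iff₀ (by positivity), mul_one, mul_comm]
    have : (1:ℝ) ≤ n := by exact_mod_cast hn1
    gcongr
  have hfI : IntegrableOn f (unitCube (e+2)) :=
    ((Phi_contDiff _ n φ hφ A σ 0).continuous.continuousOn).integrableOn_compact (unitCube_compact _)
  have hlow : A / (2 * 4^(e+2) * a^2) ≤ theta1 (e+2) m (volume.restrict (unitCube (e+2))) f := by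
    apply le_csInf
    · refine ⟨_, fun _ _ _ => 0, fun _ _ => measurable_const, ?_, rfl⟩
      simp
    · rintro _ ⟨u, hu, hui, rfl⟩
      by_contra hlt
      push Not at hlt
      obtain ⟨z, hz, hzs⟩ := sample (e+2) n hn1 (fun x => |f x - ∑ s, ∏ i, u s i (x i)|)
        (fun x => abs_nonneg _) ((hfI.sub hui).abs)
      have hbad := hσ (fun s i k => u s i ((n:ℝ)⁻¹ * (z i + ((k:ℕ):ℝ))))
      set I := ∫ x in unitCube (e+2), |f x - ∑ s, ∏ i, u s i (x i)|
      set 𝓑 := (Finset.univ : Finset (Fin (e+2) → Fin n)).filter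
        (fun j => A / 2 < |A * sg (σ j) - ∑ s, ∏ i, u s i ((n:ℝ)⁻¹ * (z i + ((j i:ℕ):ℝ)))|)
      have h1 : (𝓑.card : ℝ) * (A/2) ≤ 4^(e+2) * (n^(e+2) * I) := by
        refine le_trans ?_ hzs
        rw [← nsmul_eq_mul]
        calc 𝓑.card • (A/2) ≤ ∑ j ∈ 𝓑, |A * sg (σ j) - ∑ s, ∏ i, u s i ((n:ℝ)⁻¹ * (z i + ((j i:ℕ):ℝ)))| := by
              apply Finset.card_nsmul_le_sum
              intro j hj
              exact (Finset.mem_filter.1 hj).2.le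
          _ ≤ ∑ j, |A * sg (σ j) - ∑ s, ∏ i, u s i ((n:ℝ)⁻¹ * (z i + ((j i:ℕ):ℝ)))| :=
              Finset.sum_le_sum_of_subset_of_nonneg (Finset.subset_univ _) (fun _ _ _ => abs_nonneg _)
          _ = _ := by
              refine Finset.sum_congr rfl fun j _ => ?_
              rw [hf, Phi_val (e+2) n hn1 φ hφ1 hφ0 A σ j z hz]
              rfl
      have h2 : (n:ℝ)^(e+2) = a^2 * b := by exact_mod_cast hnb
      have hbR : (0:ℝ) < b := by exact_mod_cast hb1
      rw [lt_div_iff₀ (by positivity)] at hlt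
      have h3 : (b:ℝ) < 𝓑.card := by exact_mod_cast hbad
      rw [h2] at h1
      nlinarith [mul_lt_mul_of_pos_right h3 hA0, mul_lt_mul_of_pos_left hlt hbR]
  have hfin : (M^(e+2))⁻¹ * ((2 * a * (e+2 : ℕ) : ℝ)^r)⁻¹ / (2 * 4^(e+2) * a^2) *
      (m : ℝ) ^ (-(r : ℝ) / (((e+2:ℕ) : ℝ) - 1)) ≤ A / (2 * 4^(e+2) * a^2) := by
    have h1 : (m : ℝ) ^ (-(r : ℝ) / (((e+2:ℕ) : ℝ) - 1)) = (w^r)⁻¹ := by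
      rw [hw, ← Real.rpow_natCast, ← Real.rpow_mul (by linarith), ← Real.rpow_neg (by linarith)]
      congr 1
      field_simp
    have h2 : (n:ℝ)^r ≤ (2 * a * (e+2 : ℕ) : ℝ)^r * w^r := by
      rw [← mul_pow]
      gcongr
      rw [hn]; push_cast
      push_cast at hdR
      nlinarith [mul_le_mul_of_nonneg_left hyw (mul_pos haR hdR).le]
    rw [h1, div_mul_eq_mul_div]
    gcongr
    rw [hA, mul_assoc, ← mul_inv, ← mul_inv]
    gcongr
  refine hfin.trans (hlow.trans ?_)
  have hbdd : BddAbove (Set.range fun f => ⨆ (_ : f ∈ UCr (e+2) r),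
      theta1 (e+2) m (volume.restrict (unitCube (e+2))) f) := by
    refine ⟨1, ?_⟩
    rintro _ ⟨g, rfl⟩
    by_cases hg : g ∈ UCr (e+2) r
    · simp only [hg, ciSup_unique]
      exact theta1_le_one _ r m hd g hg
    · simp [hg]
  refine le_trans (le_of_eq ?_) (le_ciSup hbdd f)
  simp only [hfU, ciSup_unique]
end
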